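/- arXiv:1010.1113 — 4 statements merged into one kernel-verified Lean document; each statement's English description precedes it below -/
import Mathlib

section
/- Let G be a 2-connected bipartite graph containing no even subdivision of K_{2,3}. Then G has a bipartite ear decomposition starting with any cycle of G: for any cycle C of G there is a sequence C = G_1 ⊆ G_2 ⊆ ... ⊆ G_m = G where each G_{i+1} is obtained from G_i by adding a path of odd length internally disjoint from G_i with both endpoints in G_i. -/
/-- `G.HasSubdivision H plen` means `G` contains a subdivision of `H` in which the path
replacing each edge of `H` has length satisfying `plen`: there is an injection `f` of the
vertices of `H` (branch vertices) into `G`, and for each edge of `H` a path in `G` between the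
corresponding branch vertices, such that no branch vertex is an internal vertex of any such
path and paths corresponding to distinct edges meet only in branch vertices. -/
def SimpleGraph.HasSubdivision {V W : Type*} (G : SimpleGraph V) (H : SimpleGraph W)
    (plen : ℕ → Prop) : Prop :=
  ∃ f : W → V, Function.Injective f ∧
    ∃ p : ∀ a b, H.Adj a b → G.Walk (f a) (f b),
      (∀ a b (h : H.Adj a b), (p a b h).IsPath) ∧
      (∀ a b (h : H.Adj a b), plen (p a b h).length) ∧
      (∀ a b (h : H.Adj a b) (w : W), f w ∈ (p a b h).support → w = a ∨ w = b) ∧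
      (∀ a b a' b' (h : H.Adj a b) (h' : H.Adj a' b'), s(a, b) ≠ s(a', b') →
        ∀ x, x ∈ (p a b h).support → x ∈ (p a' b' h').support →
          (x = f a ∨ x = f b) ∧ (x = f a' ∨ x = f b'))

/-- `G` contains a subdivision of `H`. -/
def SimpleGraph.ContainsSubdivision {V W : Type*} (G : SimpleGraph V) (H : SimpleGraph W) :
    Prop :=
  G.HasSubdivision H fun _ => True

/-- `G` contains an even subdivision of `H`, i.e. a subdivision in which every edge of `H`
is subdivided an even number of times (so the replacing paths have odd length). -/
def SimpleGraph.ContainsEvenSubdivision {V W : Type*} (G : SimpleGraph V) (H : SimpleGraph W) :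
    Prop :=
  G.HasSubdivision H fun n => Odd n

/-- Planarity, via Kuratowski's characterization: no subdivision of `K₅` or `K₃,₃`. -/
def SimpleGraph.KuratowskiPlanar {V : Type*} (G : SimpleGraph V) : Prop :=
  ¬ G.ContainsSubdivision (completeGraph (Fin 5)) ∧
    ¬ G.ContainsSubdivision (completeBipartiteGraph (Fin 3) (Fin 3))

/-- A graph is 2-connected if it has at least 3 vertices and deleting any single vertex
leaves a connected graph. -/
def SimpleGraph.TwoConnected {V : Type*} (G : SimpleGraph V) : Prop :=
  3 ≤ Nat.card V ∧ ∀ v : V, ((⊤ : G.Subgraph).deleteVerts {v}).coe.Connected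

/-- `p` is an ear of the subgraph `H`: a path of odd length with both endpoints in `H`
and no internal vertex in `H`. -/
def SimpleGraph.Subgraph.IsEar {V : Type*} {G : SimpleGraph V} (H : G.Subgraph)
    {x y : V} (p : G.Walk x y) : Prop :=
  p.IsPath ∧ Odd p.length ∧ x ∈ H.verts ∧ y ∈ H.verts ∧
    ∀ w ∈ p.support, w ∈ H.verts → w = x ∨ w = y

open SimpleGraph

namespace EarProof

variable {V : Type*} {G : SimpleGraph V}

def Conn (G : SimpleGraph V) (T : Set V) (u v : V) : Prop :=
  ∃ w : G.Walk u v, ∀ z ∈ w.support, z ∈ T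

lemma Conn.symm {T : Set V} {u v : V} (h : Conn G T u v) : Conn G T v u := by
  obtain ⟨w, hw⟩ := h
  exact ⟨w.reverse, by simpa using hw⟩

lemma Conn.trans {T : Set V} {u v w : V} (h : Conn G T u v) (h' : Conn G T v w) :
    Conn G T u w := by
  obtain ⟨p, hp⟩ := h
  obtain ⟨q, hq⟩ := h'
  refine ⟨p.append q, fun z hz => ?_⟩
  rw [Walk.mem_support_append_iff] at hz
  exact hz.elim (hp z) (hq z)

lemma Conn.mono {T T' : Set V} (hT : T ⊆ T') {u v : V} (h : Conn G T u v) : Conn G T' u v := by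
  obtain ⟨p, hp⟩ := h
  exact ⟨p, fun z hz => hT (hp z hz)⟩

def Good (G : SimpleGraph V) (S : Set V) : Prop :=
  ∀ a u v, u ∈ S → v ∈ S → u ≠ a → v ≠ a → Conn G (S \ {a}) u v

lemma first_hit (S : Set V) {t y : V} (w : G.Walk t y) (hy : y ∈ S) :
    ∃ (y' : V) (q : G.Walk t y'), q.IsPath ∧ y' ∈ S ∧ (∀ z ∈ q.support, z ∈ S → z = y') ∧
      ∀ z ∈ q.support, z ∈ w.support := by
  classical
  induction w with
  | nil => exact ⟨_, .nil, by simp, hy, by simp, by simp⟩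
  | @cons a b c hab w ih =>
    by_cases ha : a ∈ S
    · exact ⟨a, .nil, by simp, ha, by simp, by simp⟩
    · obtain ⟨y', q, hq, hy', h1, h2⟩ := ih hy
      refine ⟨y', (Walk.cons hab q).bypass, Walk.bypass_isPath _, hy', ?_, ?_⟩
      · intro z hz hzS
        have := Walk.support_bypass_subset_support _ hz
        rw [Walk.support_cons, List.mem_cons] at this
        rcases this with rfl | h
        · exact absurd hzS ha
        · exact h1 z h hzS
      · intro z hz
        have := Walk.support_bypass_subset_support _ hz
        rw [Walk.support_cons, List.mem_cons] at this
        rw [Walk.support_cons, List.mem_cons]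
        exact this.imp id (h2 z)

lemma append_path {u v w : V} {p : G.Walk u v} {q : G.Walk v w} (hp : p.IsPath) (hq : q.IsPath)
    (h : ∀ z ∈ p.support, z ∈ q.support → z = v) : (p.append q).IsPath := by
  rw [Walk.isPath_def, Walk.support_append, List.nodup_append]
  refine ⟨hp.support_nodup, hq.support_nodup.tail, ?_⟩
  rintro a ha b hb rfl
  have := h a ha (List.mem_of_mem_tail hb)
  subst this
  have hn := hq.support_nodup
  rw [Walk.support_eq_cons] at hn
  exact (List.nodup_cons.1 hn).1 hb

lemma two_paths_step {S : Set V} {x y z w : V} (hyz : G.Adj y z) (hy : y ∈ S) (hyx : y ≠ x)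
    (P Q : G.Walk x z) (hP : P.IsPath) (hQ : Q.IsPath)
    (hPS : ∀ s ∈ P.support, s ∈ S) (hQS : ∀ s ∈ Q.support, s ∈ S)
    (hPQ : ∀ s ∈ P.support, s ∈ Q.support → s = x ∨ s = z)
    (r : G.Walk y w) (hr : r.IsPath) (hrS : ∀ s ∈ r.support, s ∈ S ∧ s ≠ z)
    (hrP : ∀ s ∈ r.support, s ∈ P.support → s = w) (hrQ : ∀ s ∈ r.support, s ∈ Q.support → s = w)
    (hw : w ∈ P.support) :
    ∃ P Q : G.Walk x y, P.IsPath ∧ Q.IsPath ∧ (∀ s ∈ P.support, s ∈ S) ∧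
      (∀ s ∈ Q.support, s ∈ S) ∧ ∀ s ∈ P.support, s ∈ Q.support → s = x ∨ s = y := by
  classical
  have hwz : w ≠ z := (hrS w (by simp)).2
  have hyQ : y ∉ Q.support := by
    intro hyQ
    have h1 : y = w := hrQ y (by simp) hyQ
    subst h1
    rcases hPQ y hw hyQ with h | h
    · exact hyx h
    · exact hwz h
  refine ⟨(P.takeUntil w hw).append r.reverse, Q.concat hyz.symm, ?_, ?_, ?_, ?_, ?_⟩
  · refine append_path (hP.takeUntil hw) hr.reverse ?_
    intro s hs hs'
    exact hrP s (by simpa using hs') (Walk.support_takeUntil_subset_support _ _ hs)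
  · exact hQ.concat hyQ _
  · intro s hs
    rw [Walk.mem_support_append_iff] at hs
    rcases hs with hs | hs
    · exact hPS s (Walk.support_takeUntil_subset_support _ _ hs)
    · exact (hrS s (by simpa using hs)).1
  · intro s hs
    rw [Walk.support_concat] at hs
    simp only [List.concat_eq_append, List.mem_append, List.mem_singleton] at hs
    rcases hs with hs | rfl
    · exact hQS s hs
    · exact hy
  · intro s hs hs'
    rw [Walk.support_concat] at hs'
    simp only [List.concat_eq_append, List.mem_append, List.mem_singleton] at hs'
    rcases hs' with hs' | rfl
    swap
    · exact Or.inr rfl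
    have hsT : s ∈ (P.takeUntil w hw).support := by
      rw [Walk.mem_support_append_iff] at hs
      rcases hs with hs | hs
      · exact hs
      · rw [hrQ s (by simpa using hs) hs']; simp
    rcases hPQ s (Walk.support_takeUntil_subset_support _ _ hsT) hs' with h | h
    · exact Or.inl h
    · subst h
      exact absurd hsT (Walk.endpoint_notMem_support_takeUntil hP hw hwz.symm)

lemma two_paths {S : Set V} (hS : Good G S) {x y : V} (w : G.Walk y x)
    (hw : ∀ z ∈ w.support, z ∈ S) :
    ∃ P Q : G.Walk x y, P.IsPath ∧ Q.IsPath ∧ (∀ s ∈ P.support, s ∈ S) ∧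
      (∀ s ∈ Q.support, s ∈ S) ∧ ∀ s ∈ P.support, s ∈ Q.support → s = x ∨ s = y := by
  induction w with
  | nil => exact ⟨.nil, .nil, by simp, by simp, hw, hw, by simp⟩
  | @cons y z x hyz w ih =>
    have hyS : y ∈ S := hw y (by simp)
    have hw' : ∀ s ∈ w.support, s ∈ S := fun s hs => hw s (by simp [hs])
    have hzS : z ∈ S := hw' z (by simp)
    have hxS : x ∈ S := hw' x (by simp)
    by_cases hyx : y = x
    · subst hyx
      exact ⟨.nil, .nil, by simp, by simp, by simpa using hyS, by simpa using hyS, by simp⟩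
    by_cases hzx : z = x
    · subst hzx
      refine ⟨hyz.symm.toWalk, hyz.symm.toWalk, ?_, ?_, ?_, ?_, ?_⟩ <;>
        simp [hyz.ne', hyS, hzS]
    obtain ⟨P, Q, hP, hQ, hPS, hQS, hPQ⟩ := ih hw'
    obtain ⟨R, hR⟩ := hS z y x hyS hxS hyz.ne (Ne.symm hzx)
    obtain ⟨w', r, hr, hw'1, hr1, hr2⟩ := first_hit {s | s ∈ P.support ∨ s ∈ Q.support} R (by simp)
    have hrS : ∀ s ∈ r.support, s ∈ S ∧ s ≠ z := fun s hs => by simpa using hR s (hr2 s hs)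
    rcases hw'1 with h | h
    · exact two_paths_step hyz hyS hyx P Q hP hQ hPS hQS hPQ r hr hrS
        (fun s hs h => hr1 s hs (Or.inl h)) (fun s hs h => hr1 s hs (Or.inr h)) h
    · exact two_paths_step hyz hyS hyx Q P hQ hP hQS hPS (fun s h1 h2 => hPQ s h2 h1) r hr hrS
        (fun s hs h => hr1 s hs (Or.inr h)) (fun s hs h => hr1 s hs (Or.inl h)) h

lemma good_cycle {v : V} (c : G.Walk v v) (hc : c.IsCycle) : Good G {z | z ∈ c.support} := by
  classical
  intro a u w hu hw hua hwa
  by_cases ha : a ∈ c.support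
  · have hc' := hc.rotate ha
    have hm : ∀ z, z ∈ (c.rotate a ha).support ↔ z ∈ c.support :=
      fun z => Walk.mem_support_rotate_iff c a ha
    generalize c.rotate a ha = d at hc' hm
    cases d with
    | nil => simp at hc'
    | @cons _ b _ hab q =>
      have hq : q.IsPath := ((Walk.cons_isCycle_iff q hab).1 hc').1
      have key : ∀ u, u ∈ c.support → u ≠ a → Conn G ({z | z ∈ c.support} \ {a}) b u := by
        intro u hu hua
        have huq : u ∈ q.support := by
          have := (hm u).2 hu
          rw [Walk.support_cons, List.mem_cons] at this
          exact this.resolve_left hua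
        refine ⟨q.takeUntil u huq, fun z hz => ⟨?_, ?_⟩⟩
        · refine (hm z).1 ?_
          rw [Walk.support_cons, List.mem_cons]
          exact Or.inr (Walk.support_takeUntil_subset_support _ _ hz)
        · rintro rfl
          exact Walk.endpoint_notMem_support_takeUntil hq huq hua.symm hz
      exact (key u hu hua).symm.trans (key w hw hwa)
  · have key : ∀ u, u ∈ c.support → Conn G ({z | z ∈ c.support} \ {a}) v u := by
      intro u hu
      refine ⟨c.takeUntil u hu, fun z hz => ?_⟩
      have := Walk.support_takeUntil_subset_support _ _ hz
      refine ⟨this, ?_⟩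
      rintro rfl
      exact ha this
    exact (key u hu).symm.trans (key w hw)

lemma good_ear {S : Set V} (hS : Good G S) {x y : V} (hx : x ∈ S) (hy : y ∈ S)
    (hxy : x ≠ y) (p : G.Walk x y) (hp : p.IsPath) :
    Good G (S ∪ {z | z ∈ p.support}) := by
  classical
  intro a u v hu hv hua hva
  have key : ∀ u, u ∈ S ∪ {z | z ∈ p.support} → u ≠ a →
      ∃ s ∈ S, s ≠ a ∧ Conn G ((S ∪ {z | z ∈ p.support}) \ {a}) u s := by
    intro u hu hua
    rcases hu with hu | hu
    · exact ⟨u, hu, hua, .nil, by simp [hu, hua]⟩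
    · obtain ⟨q, r, hq, hr, rfl⟩ := hp.mem_support_iff_exists_append.1 hu
      by_cases haq : a ∈ q.support
      · have har : a ∉ r.support := by
          intro har
          exact hp.ne_of_mem_support_of_append hua.symm haq har rfl
        refine ⟨y, hy, fun h => har (by simp [← h]), r, fun z hz => ⟨Or.inr ?_, ?_⟩⟩
        · simp [Walk.mem_support_append_iff, hz]
        · rintro rfl; exact har hz
      · refine ⟨x, hx, fun h => haq (by simp [← h]), q.reverse, fun z hz => ⟨Or.inr ?_, ?_⟩⟩
        · rw [Walk.support_reverse, List.mem_reverse] at hz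
          simp [Walk.mem_support_append_iff, hz]
        · rw [Walk.support_reverse, List.mem_reverse] at hz
          rintro rfl; exact haq hz
  obtain ⟨s, hs, hsa, h1⟩ := key u hu hua
  obtain ⟨t, ht, hta, h2⟩ := key v hv hva
  refine h1.trans (Conn.trans ?_ h2.symm)
  exact (hS a s t hs ht hsa hta).mono (Set.sdiff_subset_sdiff_left Set.subset_union_left)

lemma subdiv_of {x y : V} (hxy : x ≠ y) (s : Fin 3 → V) (hs : ∀ i, G.Adj x (s i))
    (q : ∀ i, G.Walk (s i) y) (hq : ∀ i, (q i).IsPath) (hodd : ∀ i, Odd (q i).length)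
    (hx : ∀ i, x ∉ (q i).support)
    (hd : ∀ i j, i ≠ j → ∀ z ∈ (q i).support, z ∈ (q j).support → z = y) :
    G.ContainsEvenSubdivision (completeBipartiteGraph (Fin 2) (Fin 3)) := by
  have hsy : ∀ i, s i ≠ y := by
    intro i h
    have h1 := hq i
    have h2 := hodd i
    generalize q i = r at h1 h2
    revert r
    rw [h]
    intro r h1 h2
    rw [Walk.isPath_iff_eq_nil.1 h1] at h2
    simp at h2
  have hsinj : ∀ i j, s i = s j → i = j := by
    intro i j h
    by_contra hij
    exact hsy i (hd i j hij (s i) (by simp) (by rw [h]; simp))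
  have hsq : ∀ i j, s i ∈ (q j).support → i = j := by
    intro i j h
    by_contra hij
    exact hsy i (hd i j hij (s i) (by simp) h)
  let e : Fin 2 → V := fun i => if i = 0 then x else y
  let p' : ∀ (i : Fin 2) (j : Fin 3), G.Walk (e i) (s j) := fun i j =>
    match i with
    | 0 => (hs j).toWalk
    | 1 => (q j).reverse
  have hp0 : ∀ j z, z ∈ (p' 0 j).support ↔ z = x ∨ z = s j := by intro j z; simp [p', e]
  have hp1 : ∀ j z, z ∈ (p' 1 j).support ↔ z ∈ (q j).support := by intro j z; simp [p']
  have A1 : ∀ i j, (p' i j).IsPath := by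
    intro i j
    fin_cases i
    · simpa [p', e] using (hs j).ne
    · exact (hq j).reverse
  have A2 : ∀ i j, Odd (p' i j).length := by
    intro i j
    fin_cases i
    · show Odd (hs j).toWalk.length
      simp
    · show Odd (q j).reverse.length
      simpa using hodd j
  let f : Fin 2 ⊕ Fin 3 → V := Sum.elim e s
  have A3 : ∀ i j w, f w ∈ (p' i j).support → w = Sum.inl i ∨ w = Sum.inr j := by
    intro i j w hw
    fin_cases i
    · rw [show (⟨0, by omega⟩ : Fin 2) = 0 from rfl] at *
      erw [hp0] at hw
      rcases w with w | w
      · fin_cases w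
        · simp
        · rcases hw with hw | hw
          · exact absurd hw hxy.symm
          · exact absurd hw.symm (hsy j)
      · rcases hw with hw | hw
        · exact absurd hw (hs w).ne'
        · exact Or.inr (congrArg _ (hsinj _ _ hw))
    · erw [hp1] at hw
      rcases w with w | w
      · fin_cases w
        · exact absurd hw (hx j)
        · simp
      · exact Or.inr (congrArg _ (hsq _ _ hw))
  have A4 : ∀ i j i' j', ¬ (i = i' ∧ j = j') → ∀ z, z ∈ (p' i j).support →
      z ∈ (p' i' j').support → (z = e i ∨ z = s j) := by
    intro i j i' j' hne z hz hz'
    fin_cases i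
    · exact (hp0 j z).1 hz
    · have hz := (hp1 j z).1 hz
      fin_cases i'
      · rcases (hp0 j' z).1 hz' with h | h
        · exact absurd (h ▸ hz) (hx j)
        · right; rw [h] at hz ⊢; rw [hsq _ _ hz]
      · have hz' := (hp1 j' z).1 hz'
        left
        exact hd j j' (by simpa using hne) z hz hz'
  let p : ∀ a b, (completeBipartiteGraph (Fin 2) (Fin 3)).Adj a b → G.Walk (f a) (f b) :=
    fun a b h => match a, b, h with
    | .inl i, .inr j, _ => p' i j
    | .inr j, .inl i, _ => (p' i j).reverse
    | .inl _, .inl _, h => absurd h (by simp)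
    | .inr _, .inr _, h => absurd h (by simp)
  have key : ∀ a b (h : (completeBipartiteGraph (Fin 2) (Fin 3)).Adj a b), ∃ i j,
      ((a = .inl i ∧ b = .inr j) ∨ (a = .inr j ∧ b = .inl i)) ∧ (p a b h).IsPath ∧
      Odd (p a b h).length ∧ ∀ z, z ∈ (p a b h).support ↔ z ∈ (p' i j).support := by
    rintro (i | j) (i' | j') h
    · simp at h
    · exact ⟨i, j', by simp, A1 _ _, A2 _ _, fun z => Iff.rfl⟩
    · refine ⟨i', j, by simp, (A1 _ _).reverse, ?_, fun z => ?_⟩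
      · show Odd (p' i' j).reverse.length
        simpa using A2 i' j
      · show z ∈ (p' i' j).reverse.support ↔ _
        simp
    · simp at h
  refine ⟨f, ?_, p, ?_, ?_, ?_, ?_⟩
  · rintro (i | i) (j | j) h
    · fin_cases i <;> fin_cases j
      · rfl
      · exact absurd h hxy
      · exact absurd h.symm hxy
      · rfl
    · fin_cases i
      · exact absurd h (hs j).ne
      · exact absurd h.symm (hsy j)
    · fin_cases j
      · exact absurd h.symm (hs i).ne
      · exact absurd h (hsy i)
    · exact congrArg _ (hsinj i j h)
  · intro a b h
    obtain ⟨i, j, -, h1, -⟩ := key a b h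
    exact h1
  · intro a b h
    obtain ⟨i, j, -, -, h1, -⟩ := key a b h
    exact h1
  · intro a b h w hw
    obtain ⟨i, j, h1, -, -, h2⟩ := key a b h
    have := A3 i j w ((h2 _).1 hw)
    rcases h1 with ⟨rfl, rfl⟩ | ⟨rfl, rfl⟩
    · exact this
    · exact this.symm
  · intro a b a' b' h h' hne z hz hz'
    obtain ⟨i, j, h1, -, -, h2⟩ := key a b h
    obtain ⟨i', j', h1', -, -, h2'⟩ := key a' b' h'
    have hne' : ¬ (i = i' ∧ j = j') := by
      rintro ⟨rfl, rfl⟩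
      apply hne
      rcases h1 with ⟨rfl, rfl⟩ | ⟨rfl, rfl⟩ <;> rcases h1' with ⟨rfl, rfl⟩ | ⟨rfl, rfl⟩ <;> simp
    have B := A4 i j i' j' hne' z ((h2 z).1 hz) ((h2' z).1 hz')
    have B' := A4 i' j' i j (fun h => hne' ⟨h.1.symm, h.2.symm⟩) z ((h2' z).1 hz') ((h2 z).1 hz)
    constructor
    · rcases h1 with ⟨rfl, rfl⟩ | ⟨rfl, rfl⟩
      · exact B
      · exact B.symm
    · rcases h1' with ⟨rfl, rfl⟩ | ⟨rfl, rfl⟩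
      · exact B'
      · exact B'.symm

lemma subdiv_of_theta {x y : V} (hxy : x ≠ y) (P : Fin 3 → G.Walk x y)
    (hP : ∀ i, (P i).IsPath) (he : ∀ i, Even (P i).length)
    (hd : ∀ i j, i ≠ j → ∀ z ∈ (P i).support, z ∈ (P j).support → z = x ∨ z = y) :
    G.ContainsEvenSubdivision (completeBipartiteGraph (Fin 2) (Fin 3)) := by
  have key : ∀ p : G.Walk x y, p.IsPath → Even p.length → ∃ (s : V) (_ : G.Adj x s)
      (q : G.Walk s y), q.IsPath ∧ Odd q.length ∧ x ∉ q.support ∧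
        ∀ z ∈ q.support, z ∈ p.support := by
    intro p hp hpe
    cases p with
    | nil => exact absurd rfl hxy
    | @cons _ s _ h q =>
      rw [Walk.cons_isPath_iff] at hp
      refine ⟨s, h, q, hp.1, ?_, hp.2, fun z hz => by simp [hz]⟩
      rw [Walk.length_cons] at hpe
      rcases Nat.even_or_odd q.length with h | h
      · exact absurd hpe (by simpa [Nat.even_add_one] using h)
      · exact h
  choose s hs q hq ho hx hsub using fun i => key (P i) (hP i) (he i)
  refine subdiv_of hxy s hs q hq ho hx ?_
  intro i j hij z hz hz'
  rcases hd i j hij z (hsub i z hz) (hsub j z hz') with rfl | h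
  · exact absurd hz (hx i)
  · exact h

lemma conn_of_two (h2 : G.TwoConnected) (a u v : V) (hu : u ≠ a) (hv : v ≠ a) :
    Conn G {a}ᶜ u v := by
  obtain ⟨w⟩ := (h2.2 a).preconnected ⟨u, by simp [hu]⟩ ⟨v, by simp [hv]⟩
  refine ⟨w.map (Subgraph.hom _), ?_⟩
  intro z hz
  have hz := (Walk.support_map (Subgraph.hom _) w) ▸ hz
  obtain ⟨t, -, rfl⟩ := List.mem_map.1 hz
  have := t.2
  simp only [Subgraph.deleteVerts_verts] at this
  exact this.2

lemma cross {S : Set V} {s t : V} (w : G.Walk s t) (hs : s ∈ S) (ht : t ∉ S) :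
    ∃ x y, x ∈ S ∧ y ∉ S ∧ G.Adj x y := by
  induction w with
  | nil => exact absurd hs ht
  | @cons a b c hab w ih =>
    by_cases hb : b ∈ S
    · exact ih hb ht
    · exact ⟨a, b, hs, hb, hab⟩

/-- one ear step -/
def Step (H H' : G.Subgraph) : Prop :=
  ∃ (x y : V) (p : G.Walk x y), H.IsEar p ∧ H' = H ⊔ p.toSubgraph

lemma exists_step [Fintype V] (h2 : G.TwoConnected) (hbip : G.Colorable 2)
    (h : ¬ G.ContainsEvenSubdivision (completeBipartiteGraph (Fin 2) (Fin 3)))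
    (H : G.Subgraph) (hH : Good G H.verts) (hnt : H.verts.Nontrivial) (hne : H ≠ ⊤) :
    ∃ H', Step H H' ∧ ¬ H' ≤ H := by
  classical
  by_cases hv : ∀ v, v ∈ H.verts
  · have : ∃ x y, G.Adj x y ∧ ¬ H.Adj x y := by
      by_contra! hcon
      apply hne
      refine Subgraph.ext (Set.eq_univ_of_forall hv) ?_
      funext x y
      exact propext ⟨fun h => H.adj_sub h, fun h => hcon x y h⟩
    obtain ⟨x, y, hxy, hn⟩ := this
    refine ⟨_, ⟨x, y, hxy.toWalk, ⟨by simpa using hxy.ne, by simp, hv _, hv _, by simp⟩, rfl⟩, ?_⟩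
    intro hle
    exact hn (hle.2 (Or.inr (by simp)))
  · push Not at hv
    obtain ⟨t0, ht0⟩ := hv
    have : ∃ x t, x ∈ H.verts ∧ t ∉ H.verts ∧ G.Adj x t := by
      obtain ⟨s, hs, s', hs', hss⟩ := hnt
      obtain ⟨w, -⟩ := conn_of_two h2 s' s t0 hss (fun h => ht0 (h ▸ hs'))
      exact cross w hs ht0
    obtain ⟨x, t, hx, ht, hxt⟩ := this
    obtain ⟨y0, hy0, hy0x⟩ := hnt.exists_ne x
    obtain ⟨w, hw⟩ := conn_of_two h2 x t y0 hxt.ne' hy0x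
    obtain ⟨y, q, hq, hy, hq1, hq2⟩ := first_hit H.verts w hy0
    have hxq : x ∉ q.support := fun hh => (hw x (hq2 x hh)) rfl
    have hxy : x ≠ y := fun hh => hxq (by rw [hh]; simp)
    have hp : (Walk.cons hxt q).IsPath := by
      rw [Walk.cons_isPath_iff]; exact ⟨hq, hxq⟩
    have hpi : ∀ w ∈ (Walk.cons hxt q).support, w ∈ H.verts → w = x ∨ w = y := by
      intro w hw hwH
      rw [Walk.support_cons, List.mem_cons] at hw
      exact hw.imp id (fun h => hq1 w h hwH)
    have htp : t ∈ (Walk.cons hxt q).support := by simp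
    generalize Walk.cons hxt q = p at hp hpi htp
    rcases Nat.even_or_odd p.length with hev | hod
    · exfalso
      obtain ⟨w, hw⟩ := hH t y x hy hx (fun h => ht (h ▸ hy)) (fun h => ht (h ▸ hx))
      obtain ⟨P, Q, hP, hQ, hPS, hQS, hPQ⟩ := two_paths hH w (fun z hz => (hw z hz).1)
      obtain ⟨col⟩ := hbip
      have hall : ∀ r : G.Walk x y, Even r.length := by
        intro r
        let col' : G.Coloring Bool :=
          G.recolorOfEquiv finTwoEquiv col
        rw [col'.even_length_iff_congr, ← col'.even_length_iff_congr p]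
        exact hev
      refine h (subdiv_of_theta hxy ![p, P, Q] ?_ (fun i => hall _) ?_)
      · intro i; fin_cases i
        · exact hp
        · exact hP
        · exact hQ
      · intro i j hij z hz hz'
        fin_cases i <;> fin_cases j
        · exact absurd rfl hij
        · exact hpi z hz (hPS z hz')
        · exact hpi z hz (hQS z hz')
        · exact hpi z hz' (hPS z hz)
        · exact absurd rfl hij
        · exact hPQ z hz hz'
        · exact hpi z hz' (hQS z hz)
        · exact hPQ z hz' hz
        · exact absurd rfl hij
    · refine ⟨_, ⟨x, y, p, ⟨hp, hod, hx, hy, hpi⟩, rfl⟩, ?_⟩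
      intro hle
      exact ht (hle.1 (Or.inr (by simpa using htp)))

lemma good_step {H H' : G.Subgraph} (hs : Step H H') (hH : Good G H.verts) : Good G H'.verts := by
  obtain ⟨x, y, p, ⟨hp, ho, hx, hy, -⟩, rfl⟩ := hs
  have hxy : x ≠ y := by
    rintro rfl
    rw [Walk.isPath_iff_eq_nil.1 hp] at ho
    simp at ho
  have := good_ear hH hx hy hxy p hp
  rwa [Subgraph.verts_sup, Walk.verts_toSubgraph]

lemma le_step {H H' : G.Subgraph} (hs : Step H H') : H ≤ H' := by
  obtain ⟨x, y, p, -, rfl⟩ := hs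
  exact le_sup_left

lemma seq_of {A B : G.Subgraph} (h : Relation.ReflTransGen Step A B) :
    ∃ (n : ℕ) (s : ℕ → G.Subgraph), s 0 = A ∧ s n = B ∧ ∀ i < n, Step (s i) (s (i + 1)) := by
  induction h with
  | refl => exact ⟨0, fun _ => A, rfl, rfl, by simp⟩
  | @tail B C _ hBC ih =>
    obtain ⟨n, s, h0, hn, hs⟩ := ih
    refine ⟨n + 1, fun i => if i ≤ n then s i else C, by simpa using h0, by simp, ?_⟩
    intro i hi
    rcases Nat.lt_succ_iff_lt_or_eq.1 hi with h | rfl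
    · have h1 : i ≤ n := by omega
      have h2 : i + 1 ≤ n := h
      simp only [h1, h2, if_true]
      exact hs i h
    · simp only [le_refl, if_true]
      rw [if_neg (by omega), hn]
      exact hBC

end EarProof

theorem stmt_13 {V : Type*} [Fintype V] (G : SimpleGraph V)
    (h2 : G.TwoConnected) (hbip : G.Colorable 2)
    (h : ¬ G.ContainsEvenSubdivision (completeBipartiteGraph (Fin 2) (Fin 3)))
    {v : V} (c : G.Walk v v) (hc : c.IsCycle) :
    ∃ (m : ℕ) (Gs : Fin (m + 1) → G.Subgraph),
      Gs 0 = c.toSubgraph ∧ Gs (Fin.last m) = ⊤ ∧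
      ∀ i : Fin m, ∃ (x y : V) (p : G.Walk x y),
        (Gs i.castSucc).IsEar p ∧ Gs i.succ = Gs i.castSucc ⊔ p.toSubgraph := by
  classical
  have inv : ∀ H, Relation.ReflTransGen EarProof.Step c.toSubgraph H →
      EarProof.Good G H.verts ∧ c.toSubgraph ≤ H := by
    intro H hH
    induction hH with
    | refl =>
      refine ⟨?_, le_rfl⟩
      rw [Walk.verts_toSubgraph]
      exact EarProof.good_cycle c hc
    | tail _ hs ih => exact ⟨EarProof.good_step hs ih.1, ih.2.trans (EarProof.le_step hs)⟩
  obtain ⟨H, hH⟩ := (Set.toFinite {H | Relation.ReflTransGen EarProof.Step c.toSubgraph H}).exists_maximal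
    ⟨_, Relation.ReflTransGen.refl⟩
  have hHr : Relation.ReflTransGen EarProof.Step c.toSubgraph H := hH.prop
  obtain ⟨hg, hle⟩ := inv H hHr
  have hnt : H.verts.Nontrivial := by
    refine ⟨v, hle.1 (by simp), c.snd, hle.1 (by simp), ?_⟩
    exact (c.adj_snd hc.not_nil).ne
  have htop : H = ⊤ := by
    by_contra hne
    obtain ⟨H', hs, hn⟩ := EarProof.exists_step h2 hbip h H hg hnt hne
    exact hn (hH.2 (hHr.tail hs) (EarProof.le_step hs))
  obtain ⟨n, s, h0, hn, hs⟩ := EarProof.seq_of hHr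
  refine ⟨n, fun i => s i, by simpa using h0, by simpa [htop] using hn, ?_⟩
  intro i
  exact hs i i.2
end

section
/- A 2-connected bipartite graph G contains no even subdivision of K_{2,3} if and only if G is planar and 1-cycle resonant (i.e., every cycle of G is a nice cycle: G − V(C) has a perfect matching for every cycle C). -/
/-- A graph is 1-cycle resonant if every cycle `C` is nice, i.e. `G - V(C)` has a
perfect matching (equivalently, `G` has a matching whose vertex set is the complement
of the vertex set of `C`). -/
def SimpleGraph.OneCycleResonant {V : Type*} (G : SimpleGraph V) : Prop :=
  ∀ (v : V) (c : G.Walk v v), c.IsCycle →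
    ∃ M : G.Subgraph, M.IsMatching ∧ M.verts = {w | w ∉ c.support}

namespace Stmt14

open SimpleGraph

variable {V : Type*} {G : SimpleGraph V}

lemma path_append {a b c : V} {p : G.Walk a b} {q : G.Walk b c} (hp : p.IsPath) (hq : q.IsPath)
    (h : ∀ z, z ∈ p.support → z ∈ q.support → z = b) : (p.append q).IsPath := by
  rw [Walk.isPath_def, Walk.support_append, List.nodup_append']
  refine ⟨hp.support_nodup, hq.support_nodup.tail, ?_⟩
  intro z hz hz'
  have h1 := h z hz (List.mem_of_mem_tail hz')
  subst h1
  have := hq.support_nodup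
  rw [← Walk.cons_tail_support, List.nodup_cons] at this
  exact this.1 hz'

lemma path_split {a b w : V} {p : G.Walk a b} (hp : p.IsPath) (hw : w ∈ p.support) :
    ∃ (q : G.Walk a w) (r : G.Walk w b), q.IsPath ∧ r.IsPath ∧
      (∀ z, z ∈ p.support ↔ z ∈ q.support ∨ z ∈ r.support) ∧
      (∀ z, z ∈ q.support → z ∈ r.support → z = w) := by
  obtain ⟨q, r, hq, hr, rfl⟩ := hp.mem_support_iff_exists_append.mp hw
  refine ⟨q, r, hq, hr, fun z => Walk.mem_support_append_iff _ _, ?_⟩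
  intro z h1 h2
  by_contra h
  exact hp.ne_of_mem_support_of_append h h1 h2 rfl

lemma exists_path {a b : V} (p : G.Walk a b) :
    ∃ q : G.Walk a b, q.IsPath ∧ ∀ z, z ∈ q.support → z ∈ p.support := by
  classical
  exact ⟨p.bypass, p.bypass_isPath, fun z hz => p.support_bypass_subset_support hz⟩

lemma first_hit {a t : V} (p : G.Walk a t) (D : Set V) (ht : t ∈ D) :
    ∃ d, d ∈ D ∧ ∃ q : G.Walk a d, q.IsPath ∧ (∀ z, z ∈ q.support → z ∈ p.support) ∧
      ∀ z, z ∈ q.support → z ∈ D → z = d := by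
  suffices h : ∃ d, d ∈ D ∧ ∃ q : G.Walk a d, (∀ z, z ∈ q.support → z ∈ p.support) ∧
      ∀ z, z ∈ q.support → z ∈ D → z = d by
    obtain ⟨d, hd, q, h1, h2⟩ := h
    obtain ⟨r, hr, hr'⟩ := exists_path q
    exact ⟨d, hd, r, hr, fun z hz => h1 z (hr' z hz), fun z hz => h2 z (hr' z hz)⟩
  induction p with
  | nil => exact ⟨_, ht, Walk.nil, by simp, by simp⟩
  | @cons a b t h p ih =>
    by_cases ha : a ∈ D
    · exact ⟨a, ha, Walk.nil, by simp, by simp⟩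
    · obtain ⟨d, hd, q, h1, h2⟩ := ih ht
      refine ⟨d, hd, Walk.cons h q, ?_, ?_⟩
      · intro z hz
        simp only [Walk.support_cons, List.mem_cons] at hz ⊢
        exact hz.imp id (h1 z)
      · intro z hz hzD
        simp only [Walk.support_cons, List.mem_cons] at hz
        rcases hz with rfl | hz
        · exact absurd hzD ha
        · exact h2 z hz hzD

lemma cycle_split {v x y : V} {c : G.Walk v v} (hc : c.IsCycle) (hx : x ∈ c.support)
    (hy : y ∈ c.support) (hxy : x ≠ y) :
    ∃ p q : G.Walk x y, p.IsPath ∧ q.IsPath ∧ (∀ z, z ∈ p.support → z ∈ c.support) ∧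
      (∀ z, z ∈ q.support → z ∈ c.support) ∧
      (∀ z, z ∈ p.support → z ∈ q.support → z = x ∨ z = y) := by
  classical
  have hc' := hc.rotate (u := x) (hu := hx)
  have hm := fun z => Walk.mem_support_rotate_iff (w := z) c x hx
  generalize c.rotate x hx = d at hc' hm
  obtain ⟨p, q, rfl⟩ := d.mem_support_iff_exists_append.mp ((hm y).2 hy)
  have hp : ¬ p.Nil := fun h => hxy h.eq
  have hq : ¬ q.Nil := fun h => hxy h.eq.symm
  refine ⟨p, q.reverse, hc'.isPath_of_append_left hq, (hc'.isPath_of_append_right hp).reverse,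
    ?_, ?_, ?_⟩
  · intro z hz
    exact (hm z).1 ((Walk.mem_support_append_iff _ _).2 (Or.inl hz))
  · intro z hz
    exact (hm z).1 ((Walk.mem_support_append_iff _ _).2 (Or.inr (by simpa using hz)))
  · intro z hz hz'
    rw [Walk.support_reverse, List.mem_reverse] at hz'
    have h := hc'.2
    rw [Walk.tail_support_append, List.nodup_append'] at h
    rw [Walk.mem_support_iff] at hz hz'
    rcases hz with hz | hz
    · exact Or.inl hz
    · rcases hz' with hz' | hz'
      · exact Or.inr hz'
      · exact absurd hz' (h.2.2 hz)

/-- Three internally disjoint paths between two distinct vertices. -/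
def Theta (G : SimpleGraph V) (u v : V) : Prop :=
  u ≠ v ∧ ∃ P : Fin 3 → G.Walk u v, (∀ i, (P i).IsPath) ∧
    ∀ i j, i ≠ j → ∀ z, z ∈ (P i).support → z ∈ (P j).support → z = u ∨ z = v

lemma bip_subdivision {m n : ℕ} {plen : ℕ → Prop} (a : Fin m → V) (b : Fin n → V)
    (ha : Function.Injective a) (hb : Function.Injective b) (hab : ∀ i j, a i ≠ b j)
    (L : ∀ i j, G.Walk (a i) (b j)) (hL : ∀ i j, (L i j).IsPath)
    (hl : ∀ i j, plen (L i j).length)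
    (h1 : ∀ i j k, a k ∈ (L i j).support → k = i)
    (h2 : ∀ i j k, b k ∈ (L i j).support → k = j)
    (h3 : ∀ i j i' j', (i ≠ i' ∨ j ≠ j') → ∀ z, z ∈ (L i j).support → z ∈ (L i' j').support →
      (z = a i ∨ z = b j) ∧ (z = a i' ∨ z = b j')) :
    G.HasSubdivision (completeBipartiteGraph (Fin m) (Fin n)) plen := by
  have key : ∀ s t : Fin m ⊕ Fin n, (completeBipartiteGraph (Fin m) (Fin n)).Adj s t →
      ∃ p : G.Walk (Sum.elim a b s) (Sum.elim a b t), p.IsPath ∧ plen p.length ∧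
        ∃ i j, s(s, t) = s(Sum.inl i, Sum.inr j) ∧ ∀ z, z ∈ p.support ↔ z ∈ (L i j).support := by
    rintro (i | j) (i' | j') h
    · simp at h
    · exact ⟨L i j', hL _ _, hl _ _, i, j', rfl, fun z => Iff.rfl⟩
    · exact ⟨(L i' j).reverse, (hL _ _).reverse, by simpa using hl _ _, i', j, Sym2.eq_swap,
        fun z => by simp⟩
    · simp at h
  choose p hp hpl I J hIJ hs using key
  refine ⟨Sum.elim a b, ?_, p, hp, hpl, ?_, ?_⟩
  · rintro (i | j) (i' | j') h
    · exact congrArg _ (ha h)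
    · exact absurd h (hab _ _)
    · exact absurd h.symm (hab _ _)
    · exact congrArg _ (hb h)
  · intro s t h w hw
    rw [hs] at hw
    have e := hIJ s t h
    rcases w with k | k
    · have := h1 _ _ _ hw
      have h' : (Sum.inl k : Fin m ⊕ Fin n) ∈ s(s, t) := by rw [e, this]; simp
      simpa using h'
    · have := h2 _ _ _ hw
      have h' : (Sum.inr k : Fin m ⊕ Fin n) ∈ s(s, t) := by rw [e, this]; simp
      simpa using h'
  · intro s t s' t' h h' hne x hx hx'
    rw [hs] at hx hx'
    have e := hIJ s t h
    have e' := hIJ s' t' h'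
    have hd : I s t h ≠ I s' t' h' ∨ J s t h ≠ J s' t' h' := by
      by_contra hcon
      push Not at hcon
      apply hne
      rw [e, e', hcon.1, hcon.2]
    have := h3 _ _ _ _ hd x hx hx'
    have conv : ∀ (s t : Fin m ⊕ Fin n) (i : Fin m) (j : Fin n), s(s, t) = s(Sum.inl i, Sum.inr j) →
        (x = a i ∨ x = b j) → (x = Sum.elim a b s ∨ x = Sum.elim a b t) := by
      intro s t i j hst hx
      rw [Sym2.eq_iff] at hst
      rcases hst with ⟨rfl, rfl⟩ | ⟨rfl, rfl⟩
      · exact hx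
      · exact hx.symm
    exact ⟨conv _ _ _ _ e this.1, conv _ _ _ _ e' this.2⟩

lemma theta_of_subdivision {W : Type*} {H : SimpleGraph W} {plen : ℕ → Prop}
    (h : G.HasSubdivision H plen) :
    ∃ f : W → V, (∀ a b, H.Adj a b → ∃ p : G.Walk (f a) (f b), plen p.length) ∧ ∀ (a b : W) (w : Fin 3 → W), a ≠ b →
      Function.Injective w → (∀ i, H.Adj a (w i)) → (∀ i, H.Adj b (w i)) → Theta G (f a) (f b) := by
  obtain ⟨f, hf, p, hp, hl, h1, h2⟩ := h
  refine ⟨f, fun a b h => ⟨p a b h, hl a b h⟩, fun a b w hab hw ha hb => ⟨fun h => hab (hf h), ?_⟩⟩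
  have hwa : ∀ i, w i ≠ a := fun i => (ha i).ne'
  have hwb : ∀ i, w i ≠ b := fun i => (hb i).ne'
  refine ⟨fun i => (p a (w i) (ha i)).append (p b (w i) (hb i)).reverse, fun i => ?_, ?_⟩
  · refine path_append (hp _ _ _) (hp _ _ _).reverse ?_
    intro z hz hz'
    rw [Walk.support_reverse, List.mem_reverse] at hz'
    have hne : s(a, w i) ≠ s(b, w i) := by
      intro h
      rw [Sym2.eq_iff] at h
      rcases h with h | h
      · exact hab h.1
      · exact hwa i h.1.symm
    have := h2 _ _ _ _ (ha i) (hb i) hne z hz hz'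
    rcases this.1 with h | h
    · rcases this.2 with h' | h'
      · exact absurd (hf (h.symm.trans h')) hab
      · exact h'
    · exact h
  · intro i j hij z hz hz'
    have hwij : w i ≠ w j := fun h => hij (hw h)
    have gen : ∀ s t (hs : H.Adj s (w i)) (ht : H.Adj t (w j)), (s = a ∨ s = b) →
        (t = a ∨ t = b) → z ∈ (p s (w i) hs).support → z ∈ (p t (w j) ht).support →
        z = f a ∨ z = f b := by
      intro s t hs ht hsa hta h h'
      have hne : s(s, w i) ≠ s(t, w j) := by
        intro e
        rw [Sym2.eq_iff] at e
        rcases e with e | e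
        · exact hwij e.2
        · rcases hta with rfl | rfl
          · exact hwa i e.2
          · exact hwb i e.2
      have := h2 _ _ _ _ hs ht hne z h h'
      rcases this.1 with e | e
      · rcases hsa with rfl | rfl <;> simp [e]
      · rcases this.2 with e' | e'
        · rcases hta with rfl | rfl <;> simp [e']
        · exact absurd (hf (e.symm.trans e')) hwij
    simp only [Walk.mem_support_append_iff, Walk.support_reverse, List.mem_reverse] at hz hz'
    rcases hz with hz | hz <;> rcases hz' with hz' | hz'
    · exact gen a a _ _ (by simp) (by simp) hz hz'
    · exact gen a b _ _ (by simp) (by simp) hz hz'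
    · exact gen b a _ _ (by simp) (by simp) hz hz'
    · exact gen b b _ _ (by simp) (by simp) hz hz'

lemma even_subdivision_of_theta (c : G.Coloring Bool) {u v : V} (h : Theta G u v)
    (huv : c u = c v) :
    G.ContainsEvenSubdivision (completeBipartiteGraph (Fin 2) (Fin 3)) := by
  obtain ⟨hne, P, hP, hd⟩ := h
  have key : ∀ i, ∃ (b : V) (q : G.Walk b v), G.Adj u b ∧ b ∈ (P i).support ∧ b ≠ v ∧ q.IsPath ∧
      u ∉ q.support ∧ Odd q.length ∧ ∀ z, z ∈ q.support → z ∈ (P i).support := by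
    intro i
    have hPi := hP i
    generalize P i = p at hPi
    cases p with
    | nil => exact absurd rfl hne
    | @cons _ b _ h q =>
      rw [Walk.cons_isPath_iff] at hPi
      have hbv : b ≠ v := by
        rintro rfl
        exact c.valid h huv
      have hub := c.valid h
      refine ⟨b, q, h, by simp, hbv, hPi.1, hPi.2, ?_, by simp +contextual⟩
      rw [c.odd_length_iff_not_congr]
      revert hub huv
      cases c u <;> cases c v <;> cases c b <;> simp
  choose b q hub hbP hbv hq huq hql hqP using key
  have hbu : ∀ i, b i ≠ u := fun i => (hub i).ne'
  have hbq : ∀ i j, b i ∈ (P j).support → i = j := by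
    intro i j h
    by_contra hij
    rcases hd i j hij _ (hbP i) h with h | h
    · exact hbu i h
    · exact hbv i h
  have hbinj : Function.Injective b := fun i j h => hbq i j (h ▸ hbP j)
  have L : ∀ (i : Fin 2) (j : Fin 3), ∃ p : G.Walk (![u, v] i) (b j), p.IsPath ∧ Odd p.length ∧
      (i = 0 → ∀ z, z ∈ p.support → z = u ∨ z = b j) ∧
      (i = 1 → ∀ z, z ∈ p.support → z ∈ (q j).support) := by
    intro i j
    fin_cases i
    · exact ⟨Walk.cons (hub j) Walk.nil, by simp [(hub j).ne], by simp, by simp, by simp⟩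
    · exact ⟨(q j).reverse, (hq j).reverse, by simpa using hql j, by simp, by simp⟩
  choose L hL hLo hL0 hL1 using L
  have h01 : ∀ i : Fin 2, i = 0 ∨ i = 1 := by decide
  refine bip_subdivision ![u, v] b ?_ hbinj ?_ L hL hLo ?_ ?_ ?_
  · intro i j h
    rcases h01 i with rfl | rfl <;> rcases h01 j with rfl | rfl <;> simp_all
  · intro i j
    rcases h01 i with rfl | rfl
    · exact (hbu j).symm
    · exact (hbv j).symm
  · intro i j k hk
    rcases h01 i with rfl | rfl <;> rcases h01 k with rfl | rfl
    · rfl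
    · rcases hL0 0 j rfl _ hk with h | h
      · exact absurd h.symm hne
      · exact absurd h.symm (hbv j)
    · exact absurd (hL1 1 j rfl _ hk) (huq j)
    · rfl
  · intro i j k hk
    rcases h01 i with rfl | rfl
    · rcases hL0 0 j rfl _ hk with h | h
      · exact absurd h (hbu k)
      · exact hbinj h
    · exact hbq _ _ (hqP j _ (hL1 1 j rfl _ hk))
  · intro i j i' j' hne' z hz hz'
    rcases h01 i with rfl | rfl <;> rcases h01 i' with rfl | rfl
    · exact ⟨hL0 0 j rfl _ hz, hL0 0 j' rfl _ hz'⟩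
    · rcases hL0 0 j rfl _ hz with rfl | rfl
      · exact absurd (hL1 1 j' rfl _ hz') (huq j')
      · have := hbq _ _ (hqP j' _ (hL1 1 j' rfl _ hz'))
        subst this
        simp
    · rcases hL0 0 j' rfl _ hz' with rfl | rfl
      · exact absurd (hL1 1 j rfl _ hz) (huq j)
      · have := hbq _ _ (hqP j _ (hL1 1 j rfl _ hz))
        subst this
        simp
    · have hj : j ≠ j' := by simpa using hne'
      have hzq := hL1 1 j rfl _ hz
      have hzq' := hL1 1 j' rfl _ hz'
      rcases hd j j' hj z (hqP _ _ hzq) (hqP _ _ hzq') with rfl | rfl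
      · exact absurd hzq (huq j)
      · simp

/-- Any two distinct vertices of `S` lie on a common cycle inside `S`. -/
def CycConn (G : SimpleGraph V) (S : Set V) : Prop :=
  ∀ x y, x ∈ S → y ∈ S → x ≠ y → ∃ (v : V) (c : G.Walk v v), c.IsCycle ∧
    x ∈ c.support ∧ y ∈ c.support ∧ ∀ z, z ∈ c.support → z ∈ S

lemma cycConn_paths {S : Set V} (hS : CycConn G S) {x y : V} (hx : x ∈ S) (hy : y ∈ S)
    (hxy : x ≠ y) :
    ∃ p q : G.Walk x y, p.IsPath ∧ q.IsPath ∧ (∀ z, z ∈ p.support → z ∈ S) ∧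
      (∀ z, z ∈ q.support → z ∈ S) ∧
      (∀ z, z ∈ p.support → z ∈ q.support → z = x ∨ z = y) := by
  obtain ⟨v, c, hc, hxc, hyc, hcS⟩ := hS x y hx hy hxy
  obtain ⟨p, q, hp, hq, h1, h2, h3⟩ := cycle_split hc hxc hyc hxy
  exact ⟨p, q, hp, hq, fun z hz => hcS z (h1 z hz), fun z hz => hcS z (h2 z hz), h3⟩

lemma fan {S : Set V} (hS : CycConn G S) {x y t : V} (hx : x ∈ S) (hy : y ∈ S) (ht : t ∈ S)
    (hxy : x ≠ y) :
    ∃ R : G.Walk x y, R.IsPath ∧ t ∈ R.support ∧ ∀ z, z ∈ R.support → z ∈ S := by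
  by_cases htx : t = x
  · obtain ⟨p, -, hp, -, hpS, -⟩ := cycConn_paths hS hx hy hxy
    exact ⟨p, hp, by simp [htx], hpS⟩
  by_cases hty : t = y
  · obtain ⟨p, -, hp, -, hpS, -⟩ := cycConn_paths hS hx hy hxy
    exact ⟨p, hp, by simp [hty], hpS⟩
  have hQ : ∃ Q : G.Walk y t, (∀ z, z ∈ Q.support → z ∈ S) ∧ x ∉ Q.support := by
    obtain ⟨p, q, hp, hq, hpS, hqS, hpq⟩ := cycConn_paths hS hy ht (Ne.symm hty)
    by_cases hxp : x ∈ p.support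
    · refine ⟨q, hqS, fun hxq => ?_⟩
      rcases hpq x hxp hxq with h | h
      · exact hxy h
      · exact htx h.symm
    · exact ⟨p, hpS, hxp⟩
  obtain ⟨Q, hQS, hxQ⟩ := hQ
  have main : ∀ A B : G.Walk x t, A.IsPath → B.IsPath → (∀ z, z ∈ A.support → z ∈ S) →
      (∀ z, z ∈ B.support → z ∈ S) → (∀ z, z ∈ A.support → z ∈ B.support → z = x ∨ z = t) →
      ∀ d (Q' : G.Walk y d), Q'.IsPath → (∀ z, z ∈ Q'.support → z ∈ Q.support) →
      (∀ z, z ∈ Q'.support → z ∈ A.support ∨ z ∈ B.support → z = d) → d ∈ A.support →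
      ∃ R : G.Walk x y, R.IsPath ∧ t ∈ R.support ∧ ∀ z, z ∈ R.support → z ∈ S := by
    intro A B hA hB hAS hBS hAB d Q' hQ' hQQ hhit hd
    obtain ⟨A1, A2, hA1, hA2, hmem, hsep⟩ := path_split hA hd
    have hdx : d ≠ x := by
      rintro rfl
      exact hxQ (hQQ d (by simp))
    have hxA2 : x ∉ A2.support := by
      intro h
      exact hdx (hsep x (by simp) h).symm
    have hR1 : (A2.reverse.append Q'.reverse).IsPath := by
      refine path_append hA2.reverse hQ'.reverse ?_
      intro z h1 h2
      simp only [Walk.support_reverse, List.mem_reverse] at h1 h2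
      exact hhit z h2 (Or.inl ((hmem z).2 (Or.inr h1)))
    refine ⟨B.append (A2.reverse.append Q'.reverse), path_append hB hR1 ?_, by simp, ?_⟩
    · intro z h1 h2
      simp only [Walk.mem_support_append_iff, Walk.support_reverse, List.mem_reverse] at h2
      have hzA2 : z ∈ A2.support := by
        rcases h2 with h2 | h2
        · exact h2
        · have := hhit z h2 (Or.inr h1)
          subst this
          simp
      rcases hAB z ((hmem z).2 (Or.inr hzA2)) h1 with rfl | h
      · exact absurd hzA2 hxA2
      · exact h
    · intro z hz
      simp only [Walk.mem_support_append_iff, Walk.support_reverse, List.mem_reverse] at hz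
      rcases hz with h | h | h
      · exact hBS z h
      · exact hAS z ((hmem z).2 (Or.inr h))
      · exact hQS z (hQQ z h)
  obtain ⟨A, B, hA, hB, hAS, hBS, hAB⟩ := cycConn_paths hS hx ht (Ne.symm htx)
  obtain ⟨d, hd, Q', hQ', hQQ, hhit⟩ :=
    first_hit Q {z | z ∈ A.support ∨ z ∈ B.support} (by simp)
  rcases hd with hd | hd
  · exact main A B hA hB hAS hBS hAB d Q' hQ' hQQ hhit hd
  · exact main B A hB hA hBS hAS (fun z h1 h2 => hAB z h2 h1) d Q' hQ' hQQ
      (fun z h1 h2 => hhit z h1 h2.symm) hd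

lemma cycConn_ear {S : Set V} (hS : CycConn G S) {x w y : V} (hx : x ∈ S) (hy : y ∈ S)
    (hw : w ∉ S) (h : G.Adj x w) (q : G.Walk w y) (hq : q.IsPath) (hxq : x ∉ q.support)
    (hqS : ∀ z, z ∈ q.support → z ∈ S → z = y) :
    CycConn G (S ∪ {z | z ∈ q.support}) := by
  have hxy : x ≠ y := by
    rintro rfl
    exact hxq (by simp)
  have key : ∀ t, t ∈ S → ∃ (v : V) (c : G.Walk v v), c.IsCycle ∧ t ∈ c.support ∧
      (∀ z, z ∈ q.support → z ∈ c.support) ∧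
      ∀ z, z ∈ c.support → z ∈ S ∪ {z | z ∈ q.support} := by
    intro t ht
    obtain ⟨R, hR, htR, hRS⟩ := fan hS hx hy ht hxy
    refine ⟨x, Walk.cons h (q.append R.reverse), ?_, ?_, ?_, ?_⟩
    · rw [Walk.cons_isCycle_iff]
      refine ⟨path_append hq hR.reverse ?_, ?_⟩
      · intro z h1 h2
        exact hqS z h1 (hRS z (by simpa using h2))
      · intro he
        rw [Walk.edges_append, List.mem_append, Walk.edges_reverse, List.mem_reverse] at he
        rcases he with he | he
        · exact hxq (q.fst_mem_support_of_mem_edges he)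
        · exact hw (hRS w (R.snd_mem_support_of_mem_edges he))
    · simp [Walk.mem_support_append_iff, htR]
    · intro z hz
      simp [Walk.mem_support_append_iff, hz]
    · intro z hz
      simp only [Walk.support_cons, List.mem_cons, Walk.mem_support_append_iff,
        Walk.support_reverse, List.mem_reverse] at hz
      rcases hz with rfl | hz | hz
      · exact Or.inl hx
      · exact Or.inr hz
      · exact Or.inl (hRS z hz)
  intro s t hs ht hst
  rcases hs with hs | hs
  · rcases ht with ht | ht
    · obtain ⟨v, c, hc, h1, h2, h3⟩ := hS s t hs ht hst
      exact ⟨v, c, hc, h1, h2, fun z hz => Or.inl (h3 z hz)⟩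
    · obtain ⟨v, c, hc, h1, h2, h3⟩ := key s hs
      exact ⟨v, c, hc, h1, h2 t ht, h3⟩
  · rcases ht with ht | ht
    · obtain ⟨v, c, hc, h1, h2, h3⟩ := key t ht
      exact ⟨v, c, hc, h2 s hs, h1, h3⟩
    · obtain ⟨v, c, hc, h1, h2, h3⟩ := key x hx
      exact ⟨v, c, hc, h2 s hs, h2 t ht, h3⟩

lemma matching_union {M N : G.Subgraph} (hM : M.IsMatching) (hN : N.IsMatching)
    (h : ∀ z, z ∈ M.verts → z ∉ N.verts) :
    ∃ K : G.Subgraph, K.IsMatching ∧ K.verts = M.verts ∪ N.verts := by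
  refine ⟨M ⊔ N, hM.sup hN ?_, rfl⟩
  rw [hM.support_eq_verts, hN.support_eq_verts, Set.disjoint_left]
  exact fun z => h z

lemma path_matching : ∀ (n : ℕ) {a b : V} (q : G.Walk a b), q.length = 2 * n → q.IsPath →
    ∃ M : G.Subgraph, M.IsMatching ∧ M.verts = {z | z ∈ q.support ∧ z ≠ b} := by
  intro n
  induction n with
  | zero =>
    intro a b q hl hq
    cases q with
    | nil =>
      refine ⟨⊥, fun v hv => absurd hv (by simp), ?_⟩
      ext z
      simp
    | cons h q => simp at hl
  | succ n ih =>
    intro a b q hl hq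
    cases q with
    | nil => simp at hl
    | @cons _ d _ h q =>
      cases q with
      | nil => simp at hl; omega
      | @cons _ e _ h' q =>
        rw [Walk.cons_isPath_iff, Walk.cons_isPath_iff] at hq
        obtain ⟨⟨hq, hd⟩, ha⟩ := hq
        obtain ⟨M, hM, hMv⟩ := ih q (by simp at hl; omega) hq
        have ha' : a ∉ q.support := fun h => ha (by simp [h])
        obtain ⟨K, hK, hKv⟩ := matching_union (Subgraph.IsMatching.subgraphOfAdj h) hM (by
          intro z hz hz'
          rw [hMv] at hz'
          simp at hz
          rcases hz with rfl | rfl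
          · exact ha' hz'.1
          · exact hd hz'.1)
        refine ⟨K, hK, ?_⟩
        rw [hKv, hMv]
        have hab : a ≠ b := by rintro rfl; exact ha' (by simp)
        have hdb : d ≠ b := by rintro rfl; exact hd (by simp)
        ext z
        simp only [subgraphOfAdj_verts, Set.mem_union, Set.mem_insert_iff, Set.mem_singleton_iff,
          Set.mem_ofPred_eq, Walk.support_cons, List.mem_cons]
        constructor
        · rintro ((rfl | rfl) | ⟨h1, h2⟩)
          · exact ⟨Or.inl rfl, hab⟩
          · exact ⟨Or.inr (Or.inl rfl), hdb⟩
          · exact ⟨Or.inr (Or.inr h1), h2⟩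
        · rintro ⟨h1 | h1 | h1, h2⟩
          · exact Or.inl (Or.inl h1)
          · exact Or.inl (Or.inr h1)
          · exact Or.inr ⟨h1, h2⟩

lemma walk_avoid (h2 : G.TwoConnected) {v a b : V} (ha : a ≠ v) (hb : b ≠ v) :
    ∃ p : G.Walk a b, v ∉ p.support := by
  have hc := h2.2 v
  obtain ⟨p⟩ := hc.preconnected ⟨a, by simp [ha]⟩ ⟨b, by simp [hb]⟩
  suffices h : v ∉ (p.map (Subgraph.hom _)).support from ⟨p.map (Subgraph.hom _), h⟩
  intro h
  rw [Walk.support_map, List.mem_map] at h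
  obtain ⟨z, -, hz⟩ := h
  have := z.2
  simp at this
  exact this hz

lemma exists_ear (h2 : G.TwoConnected) {S : Set V} {s1 s2 : V} (h1S : s1 ∈ S) (h2S : s2 ∈ S)
    (h12 : s1 ≠ s2) (hS : S ≠ Set.univ) :
    ∃ x w y, x ∈ S ∧ y ∈ S ∧ w ∉ S ∧ G.Adj x w ∧ ∃ q : G.Walk w y, q.IsPath ∧ x ∉ q.support ∧
      ∀ z, z ∈ q.support → z ∈ S → z = y := by
  obtain ⟨t, ht⟩ := (Set.ne_univ_iff_exists_notMem S).1 hS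
  obtain ⟨p, -⟩ := walk_avoid h2 (v := s2) h12 (b := t) (by rintro rfl; exact ht h2S)
  obtain ⟨d, -, hdS, hdS'⟩ := p.exists_boundary_dart S h1S ht
  obtain ⟨s, hs, hsd⟩ : ∃ s, s ∈ S ∧ s ≠ d.fst := by
    by_cases h : s1 = d.fst
    · exact ⟨s2, h2S, fun h' => h12 (h.trans h'.symm)⟩
    · exact ⟨s1, h1S, h⟩
  obtain ⟨r, hr⟩ := walk_avoid h2 (v := d.fst) (a := d.snd) d.adj.ne' hsd
  obtain ⟨y, hy, q, hq, hqr, hqS⟩ := first_hit r S hs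
  exact ⟨d.fst, d.snd, y, hdS, hy, hdS', d.adj, q, hq, fun h => hr (hqr _ h), hqS⟩

lemma resonant_of_no_even [Fintype V] (h2 : G.TwoConnected) (c : G.Coloring Bool)
    (hno : ¬ G.ContainsEvenSubdivision (completeBipartiteGraph (Fin 2) (Fin 3))) :
    G.OneCycleResonant := by
  intro v C hC
  let good : Set V → Prop := fun S => (∀ z, z ∈ C.support → z ∈ S) ∧ CycConn G S ∧
    ∃ M : G.Subgraph, M.IsMatching ∧ M.verts = {z | z ∈ S ∧ z ∉ C.support}
  have hgood : good {z | z ∈ C.support} := by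
    refine ⟨fun z hz => hz, ?_, ⊥, fun v hv => absurd hv (by simp), ?_⟩
    · intro x y hx hy _
      exact ⟨v, C, hC, hx, hy, fun z hz => hz⟩
    · ext z
      simp
  obtain ⟨S, -, hS⟩ := Finite.exists_le_maximal hgood
  obtain ⟨⟨hCS, hconn, M, hM, hMv⟩, hmax⟩ := hS
  by_cases hSu : S = Set.univ
  · refine ⟨M, hM, ?_⟩
    rw [hMv, hSu]
    simp
  exfalso
  obtain ⟨s1, s2, h1S, h2S, h12⟩ : ∃ s1 s2, s1 ∈ S ∧ s2 ∈ S ∧ s1 ≠ s2 := by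
    cases C with
    | nil => simp at hC
    | @cons _ w _ h q => exact ⟨v, w, hCS _ (by simp), hCS _ (by simp), h.ne⟩
  obtain ⟨x, w, y, hx, hy, hw, hxw, q, hq, hxq, hqS⟩ := exists_ear h2 h1S h2S h12 hSu
  have hxy : x ≠ y := by
    rintro rfl
    exact hxq (by simp)
  have hcol : c x ≠ c y := by
    intro hcxy
    apply hno
    obtain ⟨A, B, hA, hB, hAS, hBS, hAB⟩ := cycConn_paths hconn hx hy hxy
    have hE : ∀ z, z ∈ (Walk.cons hxw q).support → z ∈ S → z = x ∨ z = y := by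
      intro z hz hzS
      simp only [Walk.support_cons, List.mem_cons] at hz
      exact hz.imp id (fun h => hqS z h hzS)
    refine even_subdivision_of_theta c (u := x) (v := y)
      ⟨hxy, ![A, B, Walk.cons hxw q], ?_, ?_⟩ hcxy
    · intro i
      fin_cases i
      · exact hA
      · exact hB
      · exact (Walk.cons_isPath_iff _ _).2 ⟨hq, hxq⟩
    · intro i j hij z hz hz'
      fin_cases i <;> fin_cases j
      · exact absurd rfl hij
      · exact hAB z hz hz'
      · exact hE z hz' (hAS z hz)
      · exact hAB z hz' hz
      · exact absurd rfl hij
      · exact hE z hz' (hBS z hz)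
      · exact hE z hz (hAS z hz')
      · exact hE z hz (hBS z hz')
      · exact absurd rfl hij
  have heven : Even q.length := by
    rw [c.even_length_iff_congr]
    have := c.valid hxw
    revert this hcol
    cases c x <;> cases c w <;> cases c y <;> simp
  obtain ⟨n, hn⟩ := heven
  obtain ⟨N, hN, hNv⟩ := path_matching n q (by omega) hq
  obtain ⟨K, hK, hKv⟩ := matching_union hM hN (by
    intro z h1 h2
    rw [hMv] at h1
    rw [hNv] at h2
    exact h2.2 (hqS z h2.1 h1.1))
  have hg : good (S ∪ {z | z ∈ q.support}) := by
    refine ⟨fun z hz => Or.inl (hCS z hz), cycConn_ear hconn hx hy hw hxw q hq hxq hqS, K, hK, ?_⟩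
    rw [hKv, hMv, hNv]
    ext z
    simp only [Set.mem_union, Set.mem_ofPred_eq]
    constructor
    · rintro (⟨h1, h2⟩ | ⟨h1, h2⟩)
      · exact ⟨Or.inl h1, h2⟩
      · exact ⟨Or.inr h1, fun h => h2 (hqS z h1 (hCS z h))⟩
    · rintro ⟨h1, h2⟩
      by_cases hzS : z ∈ S
      · exact Or.inl ⟨hzS, h2⟩
      · refine Or.inr ⟨h1.resolve_left hzS, ?_⟩
        rintro rfl
        exact hzS hy
  have hle := hmax hg Set.subset_union_left
  exact hw (hle (Or.inr (by simp)))

lemma planar_of_no_even (c : G.Coloring Bool)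
    (hno : ¬ G.ContainsEvenSubdivision (completeBipartiteGraph (Fin 2) (Fin 3))) :
    G.KuratowskiPlanar := by
  have pig : ∀ x y z : Bool, x = y ∨ x = z ∨ y = z := by decide
  constructor
  · intro h
    obtain ⟨f, hf, hth⟩ := theta_of_subdivision h
    have aux : ∀ (a b : Fin 5) (w : Fin 3 → Fin 5), a ≠ b → Function.Injective w →
        (∀ i, a ≠ w i) → (∀ i, b ≠ w i) → c (f a) ≠ c (f b) := fun a b w hab hw ha hb he =>
      hno (even_subdivision_of_theta c (hth a b w hab hw ha hb) he)
    rcases pig (c (f 0)) (c (f 1)) (c (f 2)) with h | h | h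
    · exact aux 0 1 ![2, 3, 4] (by decide) (by decide) (by decide) (by decide) h
    · exact aux 0 2 ![1, 3, 4] (by decide) (by decide) (by decide) (by decide) h
    · exact aux 1 2 ![0, 3, 4] (by decide) (by decide) (by decide) (by decide) h
  · intro h
    obtain ⟨f, hf, hth⟩ := theta_of_subdivision h
    have aux : ∀ (a b : Fin 3), a ≠ b → c (f (Sum.inl a)) ≠ c (f (Sum.inl b)) :=
      fun a b hab he =>
      hno (even_subdivision_of_theta c (hth (Sum.inl a) (Sum.inl b) Sum.inr (by simpa using hab)
        Sum.inr_injective (by simp) (by simp)) he)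
    rcases pig (c (f (Sum.inl 0))) (c (f (Sum.inl 1))) (c (f (Sum.inl 2))) with h | h | h
    · exact aux 0 1 (by decide) h
    · exact aux 0 2 (by decide) h
    · exact aux 1 2 (by decide) h

lemma tripod {Hs : Set V} {z : V} (y : Fin 3 → V) (hy : Function.Injective y)
    (hyH : ∀ i, y i ∈ Hs) (w : ∀ i, G.Walk z (y i))
    (hw : ∀ i t, t ∈ (w i).support → t = y i ∨ t ∉ Hs) :
    ∃ x, x ∉ Hs ∧ ∃ T : ∀ i, G.Walk x (y i), (∀ i, (T i).IsPath) ∧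
      (∀ i t, t ∈ (T i).support → t = y i ∨ t ∉ Hs) ∧
      ∀ i j, i ≠ j → ∀ t, t ∈ (T i).support → t ∈ (T j).support → t = x := by
  have h01 : y 0 ≠ y 1 := fun h => absurd (hy h) (by decide)
  have h02 : y 0 ≠ y 2 := fun h => absurd (hy h) (by decide)
  have h12 : y 1 ≠ y 2 := fun h => absurd (hy h) (by decide)
  obtain ⟨w0, hw0, hw0'⟩ := exists_path (w 0)
  have hw0H : ∀ t, t ∈ w0.support → t = y 0 ∨ t ∉ Hs := fun t ht => hw 0 t (hw0' t ht)
  obtain ⟨d, hd, Q1, hQ1, hQ1w, hQ1d⟩ :=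
    first_hit (w 1).reverse {t | t ∈ w0.support} (by simp)
  have hQ1H : ∀ t, t ∈ Q1.support → t = y 1 ∨ t ∉ Hs := fun t ht =>
    hw 1 t (by simpa using hQ1w t ht)
  have hdH : d ∉ Hs := by
    rcases hQ1H d (by simp) with h | h
    · rcases hw0H d hd with h' | h'
      · exact absurd (h'.symm.trans h) h01
      · exact h'
    · exact h
  obtain ⟨W1, W2, hW1, hW2, hWm, hWs⟩ := path_split hw0 hd
  have hR : (Q1.append W2).IsPath := path_append hQ1 hW2 (fun t h1 h2 =>
    hQ1d t h1 ((hWm t).2 (Or.inr h2)))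
  have hRH : ∀ t, t ∈ (Q1.append W2).support → t = y 1 ∨ t = y 0 ∨ t ∉ Hs := by
    intro t ht
    rw [Walk.mem_support_append_iff] at ht
    rcases ht with h | h
    · exact (hQ1H t h).imp id Or.inr
    · exact Or.inr (hw0H t ((hWm t).2 (Or.inr h)))
  obtain ⟨e, he, Q, hQ, hQw, hQe⟩ :=
    first_hit ((w 2).reverse.append W1) {t | t ∈ (Q1.append W2).support} (by simp)
  have hQH : ∀ t, t ∈ Q.support → t = y 2 ∨ t ∉ Hs := by
    intro t ht
    have := hQw t ht
    rw [Walk.mem_support_append_iff, Walk.support_reverse, List.mem_reverse] at this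
    rcases this with h | h
    · exact hw 2 t h
    · rcases hw0H t ((hWm t).2 (Or.inl h)) with rfl | h'
      · exact absurd (hWs _ h (by simp) ▸ hyH 0) hdH
      · exact Or.inr h'
  have heH : e ∉ Hs := by
    rcases hQH e (by simp) with h | h
    · rcases hRH e he with h' | h' | h'
      · exact absurd (h'.symm.trans h) h12
      · exact absurd (h'.symm.trans h) h02
      · exact h'
    · exact h
  obtain ⟨R1, R2, hR1, hR2, hRm, hRs⟩ := path_split hR he
  have hR1H : ∀ t, t ∈ R1.support → t = y 1 ∨ t ∉ Hs := by
    intro t ht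
    rcases hRH t ((hRm t).2 (Or.inl ht)) with h | rfl | h
    · exact Or.inl h
    · exact absurd (hRs _ ht (by simp) ▸ hyH 0) heH
    · exact Or.inr h
  have hR2H : ∀ t, t ∈ R2.support → t = y 0 ∨ t ∉ Hs := by
    intro t ht
    rcases hRH t ((hRm t).2 (Or.inr ht)) with rfl | h
    · exact absurd (hRs _ (by simp) ht ▸ hyH 1) heH
    · exact h
  have key : ∀ i : Fin 3, ∃ T : G.Walk e (y i), T.IsPath ∧
      (∀ t, t ∈ T.support → t = y i ∨ t ∉ Hs) ∧
      (i = 0 → ∀ t, t ∈ T.support → t ∈ R2.support) ∧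
      (i = 1 → ∀ t, t ∈ T.support → t ∈ R1.support) ∧
      (i = 2 → ∀ t, t ∈ T.support → t ∈ Q.support) := by
    intro i
    fin_cases i
    · exact ⟨R2, hR2, hR2H, by simp, by simp, by simp⟩
    · exact ⟨R1.reverse, hR1.reverse, by simpa using hR1H, by simp, by simp, by simp⟩
    · exact ⟨Q.reverse, hQ.reverse, by simpa using hQH, by simp, by simp, by simp⟩
  choose T hT hTH hT0 hT1 hT2 using key
  refine ⟨e, heH, T, hT, hTH, ?_⟩
  have a01 : ∀ t, t ∈ (T 0).support → t ∈ (T 1).support → t = e := fun t h h' =>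
    hRs t (hT1 1 rfl t h') (hT0 0 rfl t h)
  have a02 : ∀ t, t ∈ (T 0).support → t ∈ (T 2).support → t = e := fun t h h' =>
    hQe t (hT2 2 rfl t h') ((hRm t).2 (Or.inr (hT0 0 rfl t h)))
  have a12 : ∀ t, t ∈ (T 1).support → t ∈ (T 2).support → t = e := fun t h h' =>
    hQe t (hT2 2 rfl t h') ((hRm t).2 (Or.inl (hT1 1 rfl t h)))
  intro i j hij t h h'
  fin_cases i <;> fin_cases j
  · exact absurd rfl hij
  · exact a01 t h h'
  · exact a02 t h h'
  · exact a01 t h' h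
  · exact absurd rfl hij
  · exact a12 t h h'
  · exact a02 t h' h
  · exact a12 t h' h
  · exact absurd rfl hij

lemma k33_of_theta {u v x : V} (huv : u ≠ v) (P : Fin 3 → G.Walk u v) (hP : ∀ i, (P i).IsPath)
    (hd : ∀ i j, i ≠ j → ∀ z, z ∈ (P i).support → z ∈ (P j).support → z = u ∨ z = v)
    (y : Fin 3 → V) (hyP : ∀ i, y i ∈ (P i).support) (hyu : ∀ i, y i ≠ u) (hyv : ∀ i, y i ≠ v)
    (hx : ∀ i, x ∉ (P i).support) (T : ∀ i, G.Walk x (y i)) (hT : ∀ i, (T i).IsPath)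
    (hTH : ∀ i t, t ∈ (T i).support → t = y i ∨ ∀ k, t ∉ (P k).support)
    (hTT : ∀ i j, i ≠ j → ∀ t, t ∈ (T i).support → t ∈ (T j).support → t = x) :
    G.ContainsSubdivision (completeBipartiteGraph (Fin 3) (Fin 3)) := by
  have hyPi : ∀ i j, y i ∈ (P j).support → i = j := by
    intro i j h
    by_contra hij
    rcases hd i j hij _ (hyP i) h with h | h
    · exact hyu i h
    · exact hyv i h
  have hyinj : Function.Injective y := fun i j h => hyPi i j (h ▸ hyP j)
  have hsp := fun i => path_split (hP i) (hyP i)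
  choose A B hA hB hAB hABs using hsp
  have hvA : ∀ j, v ∉ (A j).support := fun j h => hyv j (hABs j v h (by simp)).symm
  have huB : ∀ j, u ∉ (B j).support := fun j h => hyu j (hABs j u (by simp) h).symm
  have hAP : ∀ j t, t ∈ (A j).support → t ∈ (P j).support := fun j t h => (hAB j t).2 (Or.inl h)
  have hBP : ∀ j t, t ∈ (B j).support → t ∈ (P j).support := fun j t h => (hAB j t).2 (Or.inr h)
  have hux : u ≠ x := by rintro rfl; exact hx 0 (by simp)
  have hvx : v ≠ x := by rintro rfl; exact hx 0 (by simp)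
  have hyx : ∀ j, y j ≠ x := by rintro j rfl; exact hx j (hyP j)
  have uP : ∀ j, u ∈ (P j).support := fun j => by simp
  have vP : ∀ j, v ∈ (P j).support := fun j => by simp
  have key : ∀ i j : Fin 3, ∃ p : G.Walk (![u, v, x] i) (y j), p.IsPath ∧
      (i = 0 → ∀ t, t ∈ p.support → t ∈ (A j).support) ∧
      (i = 1 → ∀ t, t ∈ p.support → t ∈ (B j).support) ∧
      (i = 2 → ∀ t, t ∈ p.support → t ∈ (T j).support) := by
    intro i j
    fin_cases i
    · exact ⟨A j, hA j, by simp, by simp, by simp⟩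
    · exact ⟨(B j).reverse, (hB j).reverse, by simp, by simp, by simp⟩
    · exact ⟨T j, hT j, by simp, by simp, by simp⟩
  choose L hL hL0 hL1 hL2 using key
  replace hL0 := fun j => hL0 0 j rfl
  replace hL1 := fun j => hL1 1 j rfl
  replace hL2 := fun j => hL2 2 j rfl
  have h012 : ∀ i : Fin 3, i = 0 ∨ i = 1 ∨ i = 2 := by decide
  have e0 : (![u, v, x] : Fin 3 → V) 0 = u := rfl
  have e1 : (![u, v, x] : Fin 3 → V) 1 = v := rfl
  have e2 : (![u, v, x] : Fin 3 → V) 2 = x := rfl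
  refine bip_subdivision ![u, v, x] y ?_ hyinj ?_ L hL (fun _ _ => trivial) ?_ ?_ ?_
  · intro i j h
    rcases h012 i with rfl | rfl | rfl <;> rcases h012 j with rfl | rfl | rfl <;>
      simp only [e0, e1, e2] at h <;> first | rfl | exact absurd h ‹_› | exact absurd h.symm ‹_›
  · intro i j
    rcases h012 i with rfl | rfl | rfl
    · exact (hyu j).symm
    · exact (hyv j).symm
    · exact (hyx j).symm
  · intro i j k hk
    rcases h012 i with rfl | rfl | rfl
    · replace hk := hL0 j _ hk
      rcases h012 k with rfl | rfl | rfl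
      · rfl
      · exact absurd hk (hvA j)
      · exact absurd (hAP j _ hk) (hx j)
    · replace hk := hL1 j _ hk
      rcases h012 k with rfl | rfl | rfl
      · exact absurd hk (huB j)
      · rfl
      · exact absurd (hBP j _ hk) (hx j)
    · replace hk := hL2 j _ hk
      rcases h012 k with rfl | rfl | rfl
      · rcases hTH j _ hk with h | h
        · exact absurd h.symm (hyu j)
        · exact absurd (uP 0) (h 0)
      · rcases hTH j _ hk with h | h
        · exact absurd h.symm (hyv j)
        · exact absurd (vP 0) (h 0)
      · rfl
  · intro i j k hk
    rcases h012 i with rfl | rfl | rfl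
    · exact hyPi _ _ (hAP j _ (hL0 j _ hk))
    · exact hyPi _ _ (hBP j _ (hL1 j _ hk))
    · rcases hTH j _ (hL2 j _ hk) with h | h
      · exact hyinj h
      · exact absurd (hyP k) (h k)
  · have PT : ∀ j j' z, z ∈ (P j).support → z ∈ (T j').support → z = y j ∧ z = y j' := by
      intro j j' z h h'
      rcases hTH j' z h' with rfl | h'
      · have := hyPi _ _ h
        subst this
        simp
      · exact absurd h (h' j)
    have AB : ∀ j j' z, z ∈ (A j).support → z ∈ (B j').support → z = y j ∧ z = y j' := by
      intro j j' z h h'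
      by_cases hj : j = j'
      · subst hj
        have := hABs j z h h'
        exact ⟨this, this⟩
      · rcases hd j j' hj z (hAP _ _ h) (hBP _ _ h') with rfl | rfl
        · exact absurd h' (huB _)
        · exact absurd h (hvA _)
    intro i j i' j' hne z hz hz'
    rcases h012 i with rfl | rfl | rfl <;> rcases h012 i' with rfl | rfl | rfl
    · have hj : j ≠ j' := by simpa using hne
      have h1 := hL0 _ _ hz
      rcases hd j j' hj z (hAP _ _ h1) (hAP _ _ (hL0 _ _ hz')) with rfl | rfl
      · simp
      · exact absurd h1 (hvA _)
    · exact (AB j j' z (hL0 _ _ hz) (hL1 _ _ hz')).imp Or.inr Or.inr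
    · exact (PT j j' z (hAP _ _ (hL0 _ _ hz)) (hL2 _ _ hz')).imp Or.inr Or.inr
    · exact (AB j' j z (hL0 _ _ hz') (hL1 _ _ hz)).symm.imp Or.inr Or.inr
    · have hj : j ≠ j' := by simpa using hne
      have h1 := hL1 _ _ hz
      rcases hd j j' hj z (hBP _ _ h1) (hBP _ _ (hL1 _ _ hz')) with rfl | rfl
      · exact absurd h1 (huB _)
      · simp
    · exact (PT j j' z (hBP _ _ (hL1 _ _ hz)) (hL2 _ _ hz')).imp Or.inr Or.inr
    · exact (PT j' j z (hAP _ _ (hL0 _ _ hz')) (hL2 _ _ hz)).symm.imp Or.inr Or.inr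
    · exact (PT j' j z (hBP _ _ (hL1 _ _ hz')) (hL2 _ _ hz)).symm.imp Or.inr Or.inr
    · have hj : j ≠ j' := by simpa using hne
      have := hTT j j' hj z (hL2 _ _ hz) (hL2 _ _ hz')
      exact ⟨Or.inl this, Or.inl this⟩

/-- Sign of a vertex according to its colour. -/
def sgn (c : G.Coloring Bool) (z : V) : ℤ := if c z = true then 1 else -1

lemma sgn_adj (c : G.Coloring Bool) {a b : V} (h : G.Adj a b) : sgn c a + sgn c b = 0 := by
  have := c.valid h
  unfold sgn
  revert this
  cases c a <;> cases c b <;> simp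

lemma walk_sum (c : G.Coloring Bool) {a b : V} (p : G.Walk a b) :
    (p.support.map (sgn c)).sum = if c a = c b then sgn c a else 0 := by
  induction p with
  | nil => simp
  | @cons a d b h p ih =>
    rw [Walk.support_cons, List.map_cons, List.sum_cons, ih]
    have := c.valid h
    unfold sgn
    revert this
    cases c a <;> cases c b <;> cases c d <;> simp

lemma involution_of_paths (hres : G.OneCycleResonant) (c : G.Coloring Bool) {u v : V}
    (huv : u ≠ v) (hc : c u = c v) {p q : G.Walk u v} (hp : p.IsPath) (hq : q.IsPath)
    (hpq : ∀ z, z ∈ p.support → z ∈ q.support → z = u ∨ z = v) :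
    ∃ m : V → V, ∀ z, z ∉ p.support → z ∉ q.support →
      m z ∉ p.support ∧ m z ∉ q.support ∧ G.Adj z (m z) ∧ m (m z) = z := by
  classical
  have hcyc : (p.append q.reverse).IsCycle := by
    refine hp.isCycle_append hq.reverse ?_ (Or.inl ?_)
    · intro z hz hz'
      have h1 := hp.support_nodup
      have h2 := hq.reverse.support_nodup
      rw [← Walk.cons_tail_support, List.nodup_cons] at h1 h2
      have h3 : z ∈ q.reverse.support := List.mem_of_mem_tail hz'
      rw [Walk.support_reverse, List.mem_reverse] at h3
      rcases hpq z (List.mem_of_mem_tail hz) h3 with rfl | rfl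
      · exact h1.1 hz
      · exact h2.1 hz'
    · have he : Even p.length := by rw [c.even_length_iff_congr, hc]
      have h0 : p.length ≠ 0 := fun h => huv (Walk.eq_of_length_eq_zero h)
      obtain ⟨n, hn⟩ := he
      omega
  obtain ⟨M, hM, hMv⟩ := hres _ _ hcyc
  have hmem : ∀ z, z ∈ M.verts ↔ z ∉ p.support ∧ z ∉ q.support := by
    intro z
    rw [hMv]
    simp [Walk.mem_support_append_iff]
  refine ⟨fun z => if h : z ∈ M.verts then (hM h).choose else z, ?_⟩
  have hadj : ∀ z (h : z ∈ M.verts), M.Adj z (hM h).choose := fun z h => (hM h).choose_spec.1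
  intro z h1 h2
  have hz : z ∈ M.verts := (hmem z).2 ⟨h1, h2⟩
  have ha := hadj z hz
  have hz' := ha.snd_mem
  simp only [hz, dif_pos]
  refine ⟨((hmem _).1 hz').1, ((hmem _).1 hz').2, ha.adj_sub, ?_⟩
  rw [dif_pos hz']
  exact hM.eq_of_adj_left (hadj _ hz') ha.symm

lemma no_theta [Fintype V] (hk : ¬ G.ContainsSubdivision (completeBipartiteGraph (Fin 3) (Fin 3)))
    (hres : G.OneCycleResonant) (c : G.Coloring Bool) {u v : V} (h : Theta G u v)
    (hc : c u = c v) : False := by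
  classical
  obtain ⟨huv, P, hP, hd⟩ := h
  have hm : ∀ k : Fin 3, ∃ m : V → V, ∀ z, z ∉ (P (k + 1)).support → z ∉ (P (k + 2)).support →
      m z ∉ (P (k + 1)).support ∧ m z ∉ (P (k + 2)).support ∧ G.Adj z (m z) ∧ m (m z) = z :=
    fun k => involution_of_paths hres c huv hc (hP _) (hP _)
      (hd _ _ (by revert k; decide))
  choose m hm using hm
  let Hs : Set V := {z | ∃ k, z ∈ (P k).support}
  let Att : Fin 3 → V → Prop := fun k z => ∃ y, y ∈ (P k).support ∧ y ≠ u ∧ y ≠ v ∧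
    ∃ w : G.Walk z y, ∀ t, t ∈ w.support → t = y ∨ t ∉ Hs
  have hnot : ∀ z, ∃ k, ¬ Att k z := by
    intro z
    by_contra hcon
    push Not at hcon
    choose y hyP hyu hyv w hw using hcon
    have hyinj : Function.Injective y := by
      intro i j h
      by_contra hij
      rcases hd i j hij _ (hyP i) (h ▸ hyP j) with h | h
      · exact hyu i h
      · exact hyv i h
    obtain ⟨x, hx, T, hT, hTH, hTT⟩ := tripod (Hs := Hs) y hyinj (fun i => ⟨i, hyP i⟩) w hw
    exact hk (k33_of_theta huv P hP hd y hyP hyu hyv (fun i h => hx ⟨i, h⟩) T hT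
      (fun i t ht => (hTH i t ht).imp id (fun h k hk => h ⟨k, hk⟩)) hTT)
  have hadj : ∀ k z z', G.Adj z z' → z ∉ Hs → Att k z' → Att k z := by
    rintro k z z' ha hz ⟨y, h1, h2, h3, w, hw⟩
    refine ⟨y, h1, h2, h3, Walk.cons ha w, ?_⟩
    intro t ht
    simp only [Walk.support_cons, List.mem_cons] at ht
    rcases ht with rfl | ht
    · exact Or.inr hz
    · exact hw t ht
  let K : V → Fin 3 := fun z => if ¬ Att 0 z then 0 else if ¬ Att 1 z then 1 else 2
  have hK : ∀ z, ¬ Att (K z) z := by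
    intro z
    obtain ⟨k, hk⟩ := hnot z
    by_cases h0 : Att 0 z
    · by_cases h1 : Att 1 z
      · have hK2 : K z = 2 := by simp [K, h0, h1]
        rw [hK2]
        fin_cases k
        · exact absurd h0 hk
        · exact absurd h1 hk
        · exact hk
      · have hK1 : K z = 1 := by simp [K, h0, h1]
        rw [hK1]
        exact h1
    · have hK0 : K z = 0 := by simp [K, h0]
      rw [hK0]
      exact h0
  have hKadj : ∀ z z', G.Adj z z' → z ∉ Hs → z' ∉ Hs → K z = K z' := by
    intro z z' ha hz hz'
    have : ∀ k, Att k z ↔ Att k z' := fun k =>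
      ⟨hadj k z' z ha.symm hz', hadj k z z' ha hz⟩
    simp only [K, this]
  have hσ : ∀ z, z ∉ Hs → m (K z) z ∉ Hs ∧ G.Adj z (m (K z) z) ∧
      m (K (m (K z) z)) (m (K z) z) = z := by
    intro z hz
    obtain ⟨h1, h2, h3, h4⟩ := hm (K z) z (fun h => hz ⟨_, h⟩) (fun h => hz ⟨_, h⟩)
    have hnH : m (K z) z ∉ Hs := by
      rintro ⟨k, hk⟩
      have hkK : k = K z := by
        have : ∀ a b : Fin 3, a = b ∨ a = b + 1 ∨ a = b + 2 := by decide
        rcases this k (K z) with h | h | h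
        · exact h
        · exact absurd (h ▸ hk) h1
        · exact absurd (h ▸ hk) h2
      apply hK z
      refine ⟨m (K z) z, hkK ▸ hk, ?_, ?_, Walk.cons h3 Walk.nil, ?_⟩
      · intro h
        exact h1 (by rw [h]; simp)
      · intro h
        exact h1 (by rw [h]; simp)
      · intro t ht
        simp only [Walk.support_cons, Walk.support_nil, List.mem_cons, List.not_mem_nil,
          or_false] at ht
        rcases ht with rfl | rfl
        · exact Or.inr hz
        · exact Or.inl rfl
    refine ⟨hnH, h3, ?_⟩
    rw [← hKadj z _ h3 hz hnH]
    exact h4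
  have sum1 : ∑ z ∈ Finset.univ.filter (fun z => z ∉ Hs), sgn c z = 0 := by
    refine Finset.sum_involution (fun z _ => m (K z) z) ?_ ?_ ?_ ?_
    · intro z hz
      exact sgn_adj c (hσ z (by simpa using hz)).2.1
    · intro z hz _
      exact (hσ z (by simpa using hz)).2.1.ne'
    · intro z hz
      simpa using (hσ z (by simpa using hz)).1
    · intro z hz
      exact (hσ z (by simpa using hz)).2.2
  have sum2 : ∑ z ∈ Finset.univ.filter (fun z => z ∉ (P 0).support ∧ z ∉ (P 1).support),
      sgn c z = 0 := by
    have hm2 := hm 2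
    have e1 : (2 : Fin 3) + 1 = 0 := by decide
    have e2 : (2 : Fin 3) + 2 = 1 := by decide
    rw [e1, e2] at hm2
    refine Finset.sum_involution (fun z _ => m 2 z) ?_ ?_ ?_ ?_
    · intro z hz
      rw [Finset.mem_filter] at hz
      exact sgn_adj c (hm2 z hz.2.1 hz.2.2).2.2.1
    · intro z hz _
      rw [Finset.mem_filter] at hz
      exact (hm2 z hz.2.1 hz.2.2).2.2.1.ne'
    · intro z hz
      rw [Finset.mem_filter] at hz ⊢
      have := hm2 z hz.2.1 hz.2.2
      exact ⟨Finset.mem_univ _, this.1, this.2.1⟩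
    · intro z hz
      rw [Finset.mem_filter] at hz
      exact (hm2 z hz.2.1 hz.2.2).2.2.2
  have sum3 : ∑ z ∈ (P 2).support.toFinset, sgn c z = sgn c u := by
    rw [List.sum_toFinset _ (hP 2).support_nodup, walk_sum, if_pos hc]
  let I : Finset V := Finset.univ.filter (fun z => z ∈ (P 2).support ∧ z ≠ u ∧ z ≠ v)
  have e3 : (P 2).support.toFinset = insert u (insert v I) := by
    ext z
    simp only [List.mem_toFinset, Finset.mem_insert, I, Finset.mem_filter, Finset.mem_univ,
      true_and]
    constructor
    · intro h
      by_cases h1 : z = u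
      · exact Or.inl h1
      · by_cases h2 : z = v
        · exact Or.inr (Or.inl h2)
        · exact Or.inr (Or.inr ⟨h, h1, h2⟩)
    · rintro (rfl | rfl | h)
      · simp
      · simp
      · exact h.1
  rw [e3, Finset.sum_insert (by simp [I, huv]), Finset.sum_insert (by simp [I])] at sum3
  have e4 : Finset.univ.filter (fun z => z ∉ (P 0).support ∧ z ∉ (P 1).support) =
      Finset.univ.filter (fun z => z ∉ Hs) ∪ I := by
    ext z
    simp only [Finset.mem_union, I, Finset.mem_filter, Finset.mem_univ, true_and]
    constructor
    · rintro ⟨h0, h1⟩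
      by_cases h2 : z ∈ (P 2).support
      · refine Or.inr ⟨h2, ?_, ?_⟩
        · rintro rfl
          exact h0 (by simp)
        · rintro rfl
          exact h0 (by simp)
      · left
        rintro ⟨k, hk⟩
        fin_cases k
        · exact h0 hk
        · exact h1 hk
        · exact h2 hk
    · rintro (h | ⟨h, h1, h2⟩)
      · exact ⟨fun h' => h ⟨0, h'⟩, fun h' => h ⟨1, h'⟩⟩
      · constructor
        · intro h'
          rcases hd 2 0 (by decide) z h h' with h | h
          · exact h1 h
          · exact h2 h
        · intro h'
          rcases hd 2 1 (by decide) z h h' with h | h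
          · exact h1 h
          · exact h2 h
  have hdisj : Disjoint (Finset.univ.filter (fun z => z ∉ Hs)) I := by
    rw [Finset.disjoint_left]
    intro z hz hzI
    simp only [I, Finset.mem_filter, Finset.mem_univ, true_and] at hz hzI
    exact hz ⟨2, hzI.1⟩
  rw [e4, Finset.sum_union hdisj, sum1] at sum2
  have hsv : sgn c v ≠ 0 := by
    unfold sgn
    split <;> simp
  apply hsv
  linarith

lemma no_even_of_resonant [Fintype V] (c : G.Coloring Bool) (hpl : G.KuratowskiPlanar)
    (hres : G.OneCycleResonant) :
    ¬ G.ContainsEvenSubdivision (completeBipartiteGraph (Fin 2) (Fin 3)) := by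
  intro h
  obtain ⟨g, hodd, hth⟩ := theta_of_subdivision h
  refine no_theta hpl.2 hres c (hth (Sum.inl 0) (Sum.inl 1) Sum.inr (by simp) Sum.inr_injective
    (by simp) (by simp)) ?_
  obtain ⟨p1, o1⟩ := hodd (Sum.inl 0) (Sum.inr 0) (by simp)
  obtain ⟨p2, o2⟩ := hodd (Sum.inl 1) (Sum.inr 0) (by simp)
  rw [c.odd_length_iff_not_congr] at o1 o2
  revert o1 o2
  cases c (g (Sum.inl 0)) <;> cases c (g (Sum.inl 1)) <;> cases c (g (Sum.inr 0)) <;> simp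

end Stmt14

theorem stmt_14 {V : Type*} [Fintype V] (G : SimpleGraph V)
    (h2 : G.TwoConnected) (hbip : G.Colorable 2) :
    ¬ G.ContainsEvenSubdivision (completeBipartiteGraph (Fin 2) (Fin 3))
      ↔ G.KuratowskiPlanar ∧ G.OneCycleResonant := by
  obtain ⟨c0⟩ := hbip
  let c : G.Coloring Bool := SimpleGraph.recolorOfEquiv G finTwoEquiv c0
  constructor
  · intro h
    exact ⟨Stmt14.planar_of_no_even c h, Stmt14.resonant_of_no_even h2 c h⟩
  · rintro ⟨h1, h3⟩
    exact Stmt14.no_even_of_resonant c h1 h3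
end

section
/- If G is a 2-connected bipartite graph containing no even subdivision of K_{2,3}, then G is elementary: every edge of G lies in some perfect matching of G. -/
namespace EvenTheta

open SimpleGraph

variable {V : Type*} {G : SimpleGraph V}

/-- `T` has a perfect matching (given by a fixed-point free involution along edges). -/
def PM (G : SimpleGraph V) (T : Set V) : Prop :=
  ∃ f : V → V, ∀ x ∈ T, f x ∈ T ∧ f (f x) = x ∧ G.Adj x (f x)

theorem PM.empty : PM G (∅ : Set V) := ⟨id, by simp⟩

theorem PM.union {A B : Set V} (hA : PM G A) (hB : PM G B) (hd : ∀ x ∈ A, x ∉ B) :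
    PM G (A ∪ B) := by
  classical
  obtain ⟨f, hf⟩ := hA
  obtain ⟨g, hg⟩ := hB
  refine ⟨fun x => if x ∈ A then f x else g x, ?_⟩
  intro x hx
  by_cases hxA : x ∈ A
  · obtain ⟨h1, h2, h3⟩ := hf x hxA
    simp [hxA, h1, h2, h3]
  · have hxB : x ∈ B := by
      rcases hx with h | h
      · exact absurd h hxA
      · exact h
    obtain ⟨h1, h2, h3⟩ := hg x hxB
    have : g x ∉ A := fun h => hd _ h h1
    simp [hxA, h1, h2, h3, this]

theorem PM.pair {x y : V} (h : G.Adj x y) : PM G ({x, y} : Set V) := by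
  classical
  refine ⟨fun z => if z = x then y else x, ?_⟩
  have hne := h.ne
  rintro z (rfl | rfl)
  · simp [h, hne.symm]
  · simp [h.symm, hne.symm]

theorem PM.list : ∀ (l : List V), l.IsChain G.Adj → l.Nodup → Even l.length →
    PM G {x | x ∈ l}
  | [], _, _, _ => by simpa using PM.empty
  | [a], _, _, h => by simp at h
  | a :: b :: l, hc, hn, he => by
    have hc' : l.IsChain G.Adj := hc.tail.tail
    have hab : G.Adj a b := by
      rw [List.isChain_cons_cons] at hc
      exact hc.1
    have hn' := hn
    simp only [List.nodup_cons, List.mem_cons, not_or] at hn'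
    have ih := PM.list l hc' hn'.2.2 (by simpa [Nat.even_add_one, parity_simps] using he)
    have := (PM.pair hab).union ih (by
      rintro x (rfl | rfl) hx
      · exact hn'.1.2 hx
      · exact hn'.2.1 hx)
    convert this using 1
    ext z
    simp [or_assoc]

theorem chain_color {c : V → Bool} (hc : ∀ x y, G.Adj x y → c x ≠ c y) :
    ∀ (l : List V) (x y : V), (x :: (l ++ [y])).IsChain G.Adj → (c x = c y ↔ Odd l.length)
  | [], x, y, h => by
    have : G.Adj x y := by simpa using h
    simpa using hc _ _ this
  | a :: l, x, y, h => by
    have h1 : G.Adj x a := by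
      simp only [List.cons_append, List.isChain_cons_cons] at h
      exact h.1
    have h2 := chain_color hc l a y (by simpa using h.tail)
    have h3 := hc _ _ h1
    rw [List.length_cons, Nat.odd_add_one, ← h2]
    revert h3
    cases c x <;> cases c a <;> cases c y <;> simp

/-- Connected within `T`. -/
def R (G : SimpleGraph V) (T : Set V) (x y : V) : Prop :=
  ∃ p : G.Walk x y, ∀ z ∈ p.support, z ∈ T

theorem R.symm {T : Set V} {x y : V} (h : R G T x y) : R G T y x := by
  obtain ⟨p, hp⟩ := h
  exact ⟨p.reverse, by simpa using hp⟩

theorem R.trans {T : Set V} {x y z : V} (h : R G T x y) (h' : R G T y z) : R G T x z := by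
  obtain ⟨p, hp⟩ := h
  obtain ⟨q, hq⟩ := h'
  refine ⟨p.append q, fun w hw => ?_⟩
  rw [Walk.mem_support_append_iff] at hw
  exact hw.elim (hp w) (hq w)

theorem R.mono {T T' : Set V} {x y : V} (h : R G T x y) (hT : T ⊆ T') : R G T' x y := by
  obtain ⟨p, hp⟩ := h
  exact ⟨p, fun z hz => hT (hp z hz)⟩

theorem R.refl {T : Set V} {x : V} (h : x ∈ T) : R G T x x := ⟨Walk.nil, by simpa using h⟩

theorem R.adj {T : Set V} {x y : V} (h : G.Adj x y) (hx : x ∈ T) (hy : y ∈ T) : R G T x y :=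
  ⟨h.toWalk, by simp [hx, hy]⟩

theorem R.list {T : Set V} : ∀ (l : List V) (x : V), (x :: l).IsChain G.Adj →
    (∀ z ∈ x :: l, z ∈ T) → ∀ y ∈ x :: l, R G T x y
  | [], x, _, hT, y, hy => by
    simp at hy
    subst hy
    exact R.refl (hT _ (by simp))
  | a :: l, x, hc, hT, y, hy => by
    rcases List.mem_cons.1 hy with rfl | hy
    · exact R.refl (hT _ (by simp))
    · rw [List.isChain_cons_cons] at hc
      exact (R.adj hc.1 (hT _ (by simp)) (hT _ (by simp))).trans
        (R.list l a hc.2 (fun z hz => hT z (List.mem_cons_of_mem _ hz)) y hy)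

theorem R.list' {T : Set V} (l : List V) (x : V) (hc : (l ++ [x]).IsChain G.Adj)
    (hT : ∀ z ∈ l ++ [x], z ∈ T) (y : V) (hy : y ∈ l ++ [x]) : R G T x y := by
  have h1 : (l ++ [x]).reverse.IsChain G.Adj := by
    rw [List.isChain_reverse]
    exact hc.imp (fun a b h => h.symm)
  rw [List.reverse_append] at h1
  refine R.list l.reverse x h1 ?_ y ?_
  · intro z hz
    apply hT
    simp at hz ⊢
    tauto
  · simp at hy ⊢
    tauto

/-- Removing any vertex leaves `S` connected. -/
def Conn (G : SimpleGraph V) (S : Set V) : Prop :=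
  ∀ w u v, u ∈ S → v ∈ S → u ≠ w → v ≠ w → R G {z | z ∈ S ∧ z ≠ w} u v

/-- First hit of a set. -/
theorem firstHit (T : Set V) {a b : V} (p : G.Walk a b) (ha : a ∉ T) (hb : b ∈ T) :
    ∃ r x, x ∈ T ∧ x ∈ p.support ∧ G.Adj r x ∧ ∃ q : G.Walk a r, q.IsPath ∧
      (∀ z ∈ q.support, z ∈ p.support ∧ z ∉ T) := by
  classical
  induction p with
  | nil => exact absurd hb ha
  | @cons u v w h p ih =>
    by_cases hv : v ∈ T
    · exact ⟨u, v, hv, by simp, h, Walk.nil, by simp, by simp [ha]⟩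
    · obtain ⟨r, x, hx, hxp, hadj, q, hq, hq'⟩ := ih hv hb
      refine ⟨r, x, hx, by simp [hxp], hadj, (Walk.cons h q).bypass, Walk.bypass_isPath _, ?_⟩
      intro z hz
      have hz := Walk.support_bypass_subset_support _ hz
      rw [Walk.support_cons, List.mem_cons] at hz
      rcases hz with rfl | hz
      · simp [ha]
      · have := hq' z hz
        simp [this]

theorem firstHit' (T : Set V) {a b : V} (p : G.Walk a b) (hb : b ∈ T) :
    ∃ x ∈ T, ∃ q : G.Walk a x, q.IsPath ∧
      (∀ z ∈ q.support, z ∈ p.support) ∧ ∀ z ∈ q.support, z ∈ T → z = x := by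
  by_cases ha : a ∈ T
  · exact ⟨a, ha, Walk.nil, by simp, by simp, by simp⟩
  · obtain ⟨r, x, hx, hxp, hadj, q, hq, hq'⟩ := firstHit T p ha hb
    refine ⟨x, hx, q.concat hadj, hq.concat (fun h => (hq' _ h).2 hx) hadj, ?_, ?_⟩
    · intro z hz
      rw [Walk.support_concat] at hz
      simp at hz
      rcases hz with hz | rfl
      · exact (hq' z hz).1
      · exact hxp
    · intro z hz hzT
      rw [Walk.support_concat] at hz
      simp at hz
      rcases hz with hz | rfl
      · exact absurd hzT (hq' z hz).2
      · rfl

theorem append_isPath {u v w : V} {p : G.Walk u v} {q : G.Walk v w} (hp : p.IsPath)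
    (hq : q.IsPath) (h : ∀ z ∈ p.support, z ∈ q.support → z = v) : (p.append q).IsPath := by
  rw [Walk.isPath_def, Walk.support_append, List.nodup_append]
  refine ⟨hp.support_nodup, hq.support_nodup.tail, ?_⟩
  rintro a ha b hb rfl
  have := h a ha (List.mem_of_mem_tail hb)
  subst this
  have h2 := hq.support_nodup
  rw [Walk.support_eq_cons] at h2
  exact (List.nodup_cons.1 h2).1 hb

theorem whitney_step {S : Set V} {u v w : V} (hvw : G.Adj v w)
    (hv : v ∈ S) (huv : u ≠ v) (P Q : G.Walk u w) (hP : P.IsPath) (hQ : Q.IsPath)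
    (hPS : ∀ z ∈ P.support, z ∈ S) (hQS : ∀ z ∈ Q.support, z ∈ S)
    (hPQ : ∀ z ∈ P.support, z ∈ Q.support → z = u ∨ z = w)
    (x : V) (hxP : x ∈ P.support) (hxw : x ≠ w) (r : G.Walk v x) (hr : r.IsPath)
    (hrS : ∀ z ∈ r.support, z ∈ S ∧ z ≠ w)
    (hr' : ∀ z ∈ r.support, z ∈ P.support ∨ z ∈ Q.support → z = x) :
    ∃ P Q : G.Walk u v, P.IsPath ∧ Q.IsPath ∧ (∀ z ∈ P.support, z ∈ S) ∧
      (∀ z ∈ Q.support, z ∈ S) ∧ ∀ z ∈ P.support, z ∈ Q.support → z = u ∨ z = v := by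
  classical
  have hvQ : v ∉ Q.support := by
    intro h
    have := hr' v (by simp) (Or.inr h)
    subst this
    rcases hPQ _ hxP h with h | h
    · exact huv h.symm
    · exact hxw h
  have hwP : w ∉ (P.takeUntil x hxP).support := by
    exact Walk.endpoint_notMem_support_takeUntil hP hxP hxw.symm
  refine ⟨(P.takeUntil x hxP).append r.reverse, Q.concat hvw.symm, ?_, hQ.concat hvQ _, ?_, ?_, ?_⟩
  · apply append_isPath (hP.takeUntil hxP) hr.reverse
    intro z hz hz'
    exact hr' z (by simpa using hz') (Or.inl (Walk.support_takeUntil_subset_support _ hxP hz))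
  · intro z hz
    rw [Walk.mem_support_append_iff] at hz
    rcases hz with hz | hz
    · exact hPS z (Walk.support_takeUntil_subset_support _ hxP hz)
    · exact (hrS z (by simpa using hz)).1
  · intro z hz
    rw [Walk.support_concat] at hz
    simp at hz
    rcases hz with hz | rfl
    · exact hQS z hz
    · exact hv
  · intro z hz hz'
    rw [Walk.support_concat] at hz'
    simp at hz'
    rcases hz' with hz' | rfl
    · rw [Walk.mem_support_append_iff] at hz
      have hzP : z ∈ P.support ∧ z ≠ w := by
        rcases hz with hz | hz
        · exact ⟨Walk.support_takeUntil_subset_support _ hxP hz, fun h => hwP (h ▸ hz)⟩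
        · have hz : z ∈ r.support := by simpa using hz
          have := hr' z hz (Or.inr hz')
          subst this
          exact ⟨hxP, hxw⟩
      rcases hPQ z hzP.1 hz' with h | h
      · exact Or.inl h
      · exact absurd h hzP.2
    · exact Or.inr rfl

theorem whitney {S : Set V} (hS : Conn G S) {v u : V} (p : G.Walk v u)
    (hp : ∀ z ∈ p.support, z ∈ S) (huv : u ≠ v) :
    ∃ P Q : G.Walk u v, P.IsPath ∧ Q.IsPath ∧ (∀ z ∈ P.support, z ∈ S) ∧
      (∀ z ∈ Q.support, z ∈ S) ∧ ∀ z ∈ P.support, z ∈ Q.support → z = u ∨ z = v := by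
  induction p with
  | nil => exact absurd rfl huv
  | @cons v w u h p ih =>
    have hv : v ∈ S := hp v (by simp)
    have hw : w ∈ S := hp w (by simp)
    have hu : u ∈ S := hp u (by simp)
    by_cases huw : u = w
    · subst huw
      refine ⟨h.symm.toWalk, h.symm.toWalk, ?_, ?_, ?_, ?_, ?_⟩ <;> simp [hu, hv, huv]
    · obtain ⟨P, Q, hP, hQ, hPS, hQS, hPQ⟩ := ih (fun z hz => hp z (by simp [hz])) huw
      obtain ⟨r0, hr0⟩ := hS w v u hv hu h.ne huw
      obtain ⟨x, hx, r, hr, hrs, hr'⟩ := firstHit' {z | z ∈ P.support ∨ z ∈ Q.support} r0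
        (by simp)
      have hxw : x ≠ w := (hr0 x (hrs x (by simp))).2
      rcases hx with hx | hx
      · exact whitney_step h hv huv P Q hP hQ hPS hQS hPQ x hx hxw r hr
          (fun z hz => hr0 z (hrs z hz)) hr'
      · exact whitney_step h hv huv Q P hQ hP hQS hPS (fun z h1 h2 => hPQ z h2 h1) x hx hxw r hr
          (fun z hz => hr0 z (hrs z hz)) (fun z hz hz' => hr' z hz hz'.symm)

/-- Build an even subdivision from three internally disjoint paths. -/
theorem theta {s s' : V} (hss : s ≠ s') (y : Fin 3 → V) (hadj : ∀ i, G.Adj s (y i))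
    (t : ∀ i, G.Walk (y i) s') (ht : ∀ i, (t i).IsPath) (hs : ∀ i, s ∉ (t i).support)
    (hodd : ∀ i, Odd (t i).length)
    (hd : ∀ i j, i ≠ j → ∀ x ∈ (t i).support, x ∈ (t j).support → x = s') :
    G.ContainsEvenSubdivision (completeBipartiteGraph (Fin 2) (Fin 3)) := by
  have hys' : ∀ i, y i ≠ s' := by
    intro i h
    have h1 := ht i
    have h2 := hodd i
    have : (t i).length = 0 := by
      generalize t i = q at h1
      revert q
      rw [h]
      intro q h1
      rw [Walk.isPath_iff_eq_nil] at h1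
      simp [h1]
    rw [this] at h2
    exact absurd h2 (by simp)
  have hys : ∀ i, y i ≠ s := fun i => (hadj i).ne.symm
  have hyy : ∀ i j, y j ∈ (t i).support → i = j := by
    intro i j h
    by_contra hij
    exact hys' j (hd i j hij _ h (by simp))
  have hyinj : ∀ i j, y i = y j → i = j := by
    intro i j h
    exact hyy i j (h ▸ by simp)
  let f : Fin 2 ⊕ Fin 3 → V := Sum.elim ![s, s'] y
  let P0 : ∀ (i : Fin 2) (j : Fin 3), G.Walk (![s, s'] i) (y j) := fun i j =>
    match i with
    | 0 => (hadj j).toWalk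
    | 1 => (t j).reverse
  have P0path : ∀ i j, (P0 i j).IsPath := by
    intro i j
    fin_cases i
    · simp [P0, (hys j).symm]
    · simpa [P0] using (ht j)
  have P0odd : ∀ i j, Odd (P0 i j).length := by
    intro i j
    fin_cases i
    · simp [P0]
    · simpa [P0] using hodd j
  have P00 : ∀ j x, x ∈ (P0 0 j).support ↔ x = s ∨ x = y j := by
    intro j x
    simp [P0]
  have P01 : ∀ j x, x ∈ (P0 1 j).support ↔ x ∈ (t j).support := by
    intro j x
    simp [P0]
  have P0b : ∀ i j (w : Fin 2 ⊕ Fin 3), f w ∈ (P0 i j).support → w = Sum.inl i ∨ w = Sum.inr j := by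
    intro i j w
    fin_cases i
    · show f w ∈ (P0 0 j).support → _
      rw [P00]
      rcases w with w | w
      · fin_cases w
        · simp
        · simp only [f]
          rintro (h | h)
          · exact absurd h.symm hss
          · exact absurd h.symm (hys' j)
      · simp only [f]
        rintro (h | h)
        · exact absurd h (hys w)
        · exact Or.inr (congrArg _ (hyinj _ _ h))
    · show f w ∈ (P0 1 j).support → _
      rw [P01]
      rcases w with w | w
      · fin_cases w
        · intro h
          exact absurd h (hs j)
        · simp
      · intro h
        exact Or.inr (congrArg _ (hyy j w h).symm)
  have P0d : ∀ i j i' j', (i, j) ≠ (i', j') → ∀ x, x ∈ (P0 i j).support →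
      x ∈ (P0 i' j').support → ∃ w, x = f w := by
    intro i j i' j' hne x
    fin_cases i
    · show x ∈ (P0 0 j).support → _
      rw [P00]
      rintro (h | h) _
      · exact ⟨Sum.inl 0, h⟩
      · exact ⟨Sum.inr j, h⟩
    · show x ∈ (P0 1 j).support → _
      fin_cases i'
      · show _ → x ∈ (P0 0 j').support → _
        rw [P00]
        rintro _ (h | h)
        · exact ⟨Sum.inl 0, h⟩
        · exact ⟨Sum.inr j', h⟩
      · show _ → x ∈ (P0 1 j').support → _
        rw [P01, P01]
        intro h1 h2
        have : j ≠ j' := by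
          rintro rfl
          exact hne rfl
        exact ⟨Sum.inl 1, hd j j' this x h1 h2⟩
  let p : ∀ a b, (completeBipartiteGraph (Fin 2) (Fin 3)).Adj a b → G.Walk (f a) (f b) :=
    fun a b h => match a, b, h with
    | Sum.inl i, Sum.inr j, _ => P0 i j
    | Sum.inr j, Sum.inl i, _ => (P0 i j).reverse
    | Sum.inl i, Sum.inl j, h => absurd h (by simp)
    | Sum.inr i, Sum.inr j, h => absurd h (by simp)
  have key : ∀ a b (h : (completeBipartiteGraph (Fin 2) (Fin 3)).Adj a b), ∃ i j,
      s(a, b) = s(Sum.inl i, Sum.inr j) ∧ (p a b h).support.Perm (P0 i j).support ∧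
        (p a b h).length = (P0 i j).length := by
    intro a b h
    rcases a with i | j <;> rcases b with i' | j'
    · simp at h
    · exact ⟨i, j', rfl, List.Perm.refl _, rfl⟩
    · refine ⟨i', j, Sym2.eq_swap, ?_, ?_⟩
      · show ((P0 i' j).reverse).support.Perm _
        have e := Walk.support_reverse (P0 i' j)
        exact e ▸ List.reverse_perm _
      · exact Walk.length_reverse (P0 i' j)
    · simp at h
  refine ⟨f, ?_, p, ?_, ?_, ?_, ?_⟩
  · intro a b hab
    rcases a with i | i
    · have h1 := P0b i 0 b (hab ▸ by simp [f])
      have h2 := P0b i 1 b (hab ▸ by simp [f])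
      rcases h1 with h1 | h1
      · exact h1.symm
      · rcases h2 with h2 | h2
        · exact h2.symm
        · rw [h1] at h2
          simp at h2
    · have h1 := P0b 0 i b (hab ▸ Walk.end_mem_support (P0 0 i))
      have h2 := P0b 1 i b (hab ▸ Walk.end_mem_support (P0 1 i))
      rcases h1 with h1 | h1
      · rcases h2 with h2 | h2
        · rw [h1] at h2
          simp at h2
        · exact h2.symm
      · exact h1.symm
  · intro a b h
    obtain ⟨i, j, -, h2, -⟩ := key a b h
    rw [Walk.isPath_def, h2.nodup_iff]
    exact (P0path i j).support_nodup
  · intro a b h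
    obtain ⟨i, j, -, -, h2⟩ := key a b h
    show Odd _
    rw [h2]
    exact P0odd i j
  · intro a b h w hw
    obtain ⟨i, j, h1, h2, -⟩ := key a b h
    rw [h2.mem_iff] at hw
    have : w ∈ s(a, b) := by
      rw [h1]
      simpa using P0b i j w hw
    simpa using this
  · intro a b a' b' h h' hne x hx hx'
    obtain ⟨i, j, h1, h2, -⟩ := key a b h
    obtain ⟨i', j', h1', h2', -⟩ := key a' b' h'
    rw [h2.mem_iff] at hx
    rw [h2'.mem_iff] at hx'
    have hne' : (i, j) ≠ (i', j') := by
      rintro heq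
      apply hne
      rw [h1, h1']
      simp only [Prod.mk.injEq] at heq
      rw [heq.1, heq.2]
    obtain ⟨w, rfl⟩ := P0d i j i' j' hne' x hx hx'
    have m1 : w ∈ s(a, b) := by
      rw [h1]
      simpa using P0b i j w hx
    have m2 : w ∈ s(a', b') := by
      rw [h1']
      simpa using P0b i' j' w hx'
    simp only [Sym2.mem_iff] at m1 m2
    exact ⟨m1.imp (congrArg f) (congrArg f), m2.imp (congrArg f) (congrArg f)⟩

/-- The matching half of the invariant. -/
def Mat (G : SimpleGraph V) (c : V → Bool) (S : Set V) : Prop :=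
  PM G S ∧ ∀ u v, u ∈ S → v ∈ S → c u ≠ c v → PM G {z | z ∈ S ∧ z ≠ u ∧ z ≠ v}

theorem Conn.ear {S : Set V} (hS : Conn G S) {s s' : V} (hs : s ∈ S) (hs' : s' ∈ S)
    (hss : s ≠ s') (l : List V) (hl : ∀ z ∈ l, z ∉ S) (hn : l.Nodup)
    (hc : (s :: (l ++ [s'])).IsChain G.Adj) : Conn G (S ∪ {z | z ∈ l}) := by
  intro w
  have hmono : {z | z ∈ S ∧ z ≠ w} ⊆ {z | z ∈ S ∪ {z | z ∈ l} ∧ z ≠ w} :=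
    fun z hz => ⟨Or.inl hz.1, hz.2⟩
  have key : ∀ u, u ∈ S ∪ {z | z ∈ l} → u ≠ w → ∃ x ∈ S, x ≠ w ∧
      R G {z | z ∈ S ∪ {z | z ∈ l} ∧ z ≠ w} x u := by
    rintro u (hu | hu) huw
    · exact ⟨u, hu, huw, R.refl ⟨Or.inl hu, huw⟩⟩
    by_cases hwl : w ∈ l
    · have hsw : s ≠ w := fun h => hl w hwl (h ▸ hs)
      have hsw' : s' ≠ w := fun h => hl w hwl (h ▸ hs')
      obtain ⟨l1, l2, rfl⟩ := List.append_of_mem hwl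
      have hw1 : w ∉ l1 ∧ w ∉ l2 := by
        have := List.nodup_middle.1 hn
        simpa using (List.nodup_cons.1 this).1
      have hu : u ∈ l1 ∨ u ∈ l2 := by
        simp [huw] at hu
        exact hu
      rcases hu with hu | hu
      · refine ⟨s, hs, hsw, R.list l1 s ?_ ?_ u (by simp [hu])⟩
        · apply hc.infix
          exact ⟨[], w :: l2 ++ [s'], by simp⟩
        · intro z hz
          rcases List.mem_cons.1 hz with rfl | hz
          · exact ⟨Or.inl hs, hsw⟩
          · exact ⟨Or.inr (by simp [hz]), fun h => hw1.1 (h ▸ hz)⟩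
      · refine ⟨s', hs', hsw', R.list' l2 s' ?_ ?_ u (by simp [hu])⟩
        · apply hc.infix
          exact ⟨s :: l1 ++ [w], [], by simp⟩
        · intro z hz
          rcases List.mem_append.1 hz with hz | hz
          · exact ⟨Or.inr (by simp [hz]), fun h => hw1.2 (h ▸ hz)⟩
          · simp at hz
            subst hz
            exact ⟨Or.inl hs', hsw'⟩
    · by_cases hsw : s = w
      · have hsw' : s' ≠ w := fun h => hss (hsw.trans h.symm)
        refine ⟨s', hs', hsw', R.list' l s' hc.tail ?_ u (by simpa using Or.inl hu)⟩
        intro z hz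
        rcases List.mem_append.1 hz with hz | hz
        · exact ⟨Or.inr hz, fun h => hwl (h ▸ hz)⟩
        · simp at hz
          subst hz
          exact ⟨Or.inl hs', hsw'⟩
      · refine ⟨s, hs, hsw, R.list l s ?_ ?_ u (by simpa using Or.inr hu)⟩
        · apply hc.infix
          exact ⟨[], [s'], by simp⟩
        intro z hz
        rcases List.mem_cons.1 hz with rfl | hz
        · exact ⟨Or.inl hs, hsw⟩
        · exact ⟨Or.inr hz, fun h => hwl (h ▸ hz)⟩
  intro u v hu hv huw hvw
  obtain ⟨x, hx, hxw, hxu⟩ := key u hu huw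
  obtain ⟨x', hx', hxw', hxv⟩ := key v hv hvw
  exact (hxu.symm.trans ((hS w x x' hx hx' hxw hxw').mono hmono)).trans hxv

theorem PM.congr {A B : Set V} (h : PM G A) (e : ∀ z, z ∈ A ↔ z ∈ B) : PM G B := by
  have : A = B := Set.ext e
  exact this ▸ h

theorem bool_ne {a b d : Bool} (h : a ≠ b) (h' : a ≠ d) : b = d := by
  revert a b d
  decide

theorem Mat.ear {c : V → Bool} (hcol : ∀ x y, G.Adj x y → c x ≠ c y) {S : Set V}
    (hS : Mat G c S) {s s' : V} (hs : s ∈ S) (hs' : s' ∈ S)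
    (hss : c s ≠ c s') (l : List V) (hl : ∀ z ∈ l, z ∉ S) (hn : l.Nodup)
    (hc : (s :: (l ++ [s'])).IsChain G.Adj) : Mat G c (S ∪ {z | z ∈ l}) := by
  have hlen : Even l.length := by
    rw [← Nat.not_odd_iff_even, ← chain_color hcol l s s' hc]
    exact hss
  have hcl : l.IsChain G.Adj := hc.infix ⟨[s], [s'], by simp⟩
  have hsl : s ∉ l := fun h => hl s h hs
  have hsl' : s' ∉ l := fun h => hl s' h hs'
  have PMl := PM.list l hcl hn hlen
  -- one endpoint in `S`, the other on the ear
  have mixed : ∀ u v, u ∈ S → v ∈ l → c u ≠ c v →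
      PM G {z | z ∈ S ∪ {z | z ∈ l} ∧ z ≠ u ∧ z ≠ v} := by
    intro u v hu hv huv
    have hul : u ∉ l := fun h => hl u h hu
    have hvS := hl v hv
    obtain ⟨l1, l2, rfl⟩ := List.append_of_mem hv
    have hn' := hn
    simp only [List.nodup_append, List.nodup_cons] at hn'
    have k1 := chain_color hcol l1 s v (hc.infix ⟨[], l2 ++ [s'], by simp⟩)
    have k2 := chain_color hcol l2 v s' (hc.infix ⟨s :: l1, [], by simp⟩)
    have c1 : (s :: l1).IsChain G.Adj := hc.infix ⟨[], v :: l2 ++ [s'], by simp⟩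
    have c2 : (l2 ++ [s']).IsChain G.Adj := hc.infix ⟨s :: l1 ++ [v], [], by simp⟩
    rcases Nat.even_or_odd l1.length with he | ho
    · have hne : c s ≠ c v := by
        rw [Ne, k1]
        exact Nat.not_odd_iff_even.2 he
      have hvs : c v = c s' := bool_ne hne hss
      have h2 : Odd l2.length := k2.1 hvs
      have A := hS.2 u s' hu hs' (hvs ▸ huv)
      have B := PM.list l1 c1.tail (by grind) he
      have C := PM.list (l2 ++ [s']) c2 (by grind) (by simpa using h2.add_one)
      refine ((A.union B ?_).union C ?_).congr ?_
      · (intro z; have hz1 := hl z; have hz3 : z ∈ S ∨ z ∉ S := em _; simp only [Set.mem_union, Set.mem_ofPred_eq, List.mem_append, List.mem_cons, List.not_mem_nil] at *; grind only)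
      · (intro z; have hz1 := hl z; have hz3 : z ∈ S ∨ z ∉ S := em _; simp only [Set.mem_union, Set.mem_ofPred_eq, List.mem_append, List.mem_cons, List.not_mem_nil] at *; grind only)
      · (intro z; have hz1 := hl z; have hz3 : z ∈ S ∨ z ∉ S := em _; simp only [Set.mem_union, Set.mem_ofPred_eq, List.mem_append, List.mem_cons, List.not_mem_nil] at *; grind only)
    · have hvs : c s = c v := k1.2 ho
      have h2 : Even l2.length := by
        rw [← Nat.not_odd_iff_even, ← k2]
        exact hvs ▸ hss
      have A := hS.2 u s hu hs (by rw [hvs]; exact huv)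
      have B := PM.list (s :: l1) c1 (by grind) (by simpa using ho.add_one)
      have C := PM.list l2 (hc.infix ⟨s :: l1 ++ [v], [s'], by simp⟩) (by grind) h2
      refine ((A.union B ?_).union C ?_).congr ?_
      · (intro z; have hz1 := hl z; have hz3 : z ∈ S ∨ z ∉ S := em _; simp only [Set.mem_union, Set.mem_ofPred_eq, List.mem_append, List.mem_cons, List.not_mem_nil] at *; grind only)
      · (intro z; have hz1 := hl z; have hz3 : z ∈ S ∨ z ∉ S := em _; simp only [Set.mem_union, Set.mem_ofPred_eq, List.mem_append, List.mem_cons, List.not_mem_nil] at *; grind only)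
      · (intro z; have hz1 := hl z; have hz3 : z ∈ S ∨ z ∉ S := em _; simp only [Set.mem_union, Set.mem_ofPred_eq, List.mem_append, List.mem_cons, List.not_mem_nil] at *; grind only)
  have both : ∀ u v l1 l2 l3, l = l1 ++ u :: (l2 ++ v :: l3) → c u ≠ c v →
      PM G {z | z ∈ S ∪ {z | z ∈ l} ∧ z ≠ u ∧ z ≠ v} := by
    rintro u v l1 l2 l3 rfl huv
    have huS := hl u (by simp)
    have hvS := hl v (by simp)
    have hn' := hn
    simp only [List.nodup_append, List.nodup_cons] at hn'
    have k1 := chain_color hcol l1 s u (hc.infix ⟨[], l2 ++ v :: l3 ++ [s'], by simp⟩)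
    have k2 := chain_color hcol l2 u v (hc.infix ⟨s :: l1, l3 ++ [s'], by simp⟩)
    have k3 := chain_color hcol l3 v s' (hc.infix ⟨s :: l1 ++ u :: l2, [], by simp⟩)
    have c1 : (s :: l1).IsChain G.Adj := hc.infix ⟨[], u :: l2 ++ v :: l3 ++ [s'], by simp⟩
    have c2 : l2.IsChain G.Adj := hc.infix ⟨s :: l1 ++ [u], v :: l3 ++ [s'], by simp⟩
    have c3 : (l3 ++ [s']).IsChain G.Adj := hc.infix ⟨s :: l1 ++ u :: l2 ++ [v], [], by simp⟩
    have h2 : Even l2.length := by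
      rw [← Nat.not_odd_iff_even, ← k2]
      exact huv
    have B := PM.list l2 c2 (by grind) h2
    rcases Nat.even_or_odd l1.length with he | ho
    · have hne : c s ≠ c u := by
        rw [Ne, k1]
        exact Nat.not_odd_iff_even.2 he
      have hus : c u = c s' := bool_ne hne hss
      have h3 : Even l3.length := by
        rw [← Nat.not_odd_iff_even, ← k3]
        exact hus ▸ huv.symm
      have A := PM.list l1 c1.tail (by grind) he
      have C := PM.list l3 (hc.infix ⟨s :: l1 ++ u :: l2 ++ [v], [s'], by simp⟩) (by grind) h3
      refine (((hS.1.union A ?_).union B ?_).union C ?_).congr ?_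
      · (intro z; have hz1 := hl z; have hz3 : z ∈ S ∨ z ∉ S := em _; simp only [Set.mem_union, Set.mem_ofPred_eq, List.mem_append, List.mem_cons, List.not_mem_nil] at *; grind only)
      · (intro z; have hz1 := hl z; have hz3 : z ∈ S ∨ z ∉ S := em _; simp only [Set.mem_union, Set.mem_ofPred_eq, List.mem_append, List.mem_cons, List.not_mem_nil] at *; grind only)
      · (intro z; have hz1 := hl z; have hz3 : z ∈ S ∨ z ∉ S := em _; simp only [Set.mem_union, Set.mem_ofPred_eq, List.mem_append, List.mem_cons, List.not_mem_nil] at *; grind only)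
      · (intro z; have hz1 := hl z; have hz3 : z ∈ S ∨ z ∉ S := em _; simp only [Set.mem_union, Set.mem_ofPred_eq, List.mem_append, List.mem_cons, List.not_mem_nil] at *; grind only)
    · have hus : c s = c u := k1.2 ho
      have hvs : c v = c s' := bool_ne huv (hus ▸ hss)
      have h3 : Odd l3.length := k3.1 hvs
      have A := PM.list (s :: l1) c1 (by grind) (by simpa using ho.add_one)
      have C := PM.list (l3 ++ [s']) c3 (by grind) (by simpa using h3.add_one)
      have D := hS.2 s s' hs hs' hss
      refine (((D.union A ?_).union B ?_).union C ?_).congr ?_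
      · (intro z; have hz1 := hl z; have hz3 : z ∈ S ∨ z ∉ S := em _; simp only [Set.mem_union, Set.mem_ofPred_eq, List.mem_append, List.mem_cons, List.not_mem_nil] at *; grind only)
      · (intro z; have hz1 := hl z; have hz3 : z ∈ S ∨ z ∉ S := em _; simp only [Set.mem_union, Set.mem_ofPred_eq, List.mem_append, List.mem_cons, List.not_mem_nil] at *; grind only)
      · (intro z; have hz1 := hl z; have hz3 : z ∈ S ∨ z ∉ S := em _; simp only [Set.mem_union, Set.mem_ofPred_eq, List.mem_append, List.mem_cons, List.not_mem_nil] at *; grind only)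
      · (intro z; have hz1 := hl z; have hz3 : z ∈ S ∨ z ∉ S := em _; simp only [Set.mem_union, Set.mem_ofPred_eq, List.mem_append, List.mem_cons, List.not_mem_nil] at *; grind only)
  refine ⟨hS.1.union PMl (fun x hx hx' => hl x hx' hx), ?_⟩
  rintro u v (hu | hu) (hv | hv) huv
  · refine ((hS.2 u v hu hv huv).union PMl (fun x hx hx' => hl x hx' hx.1)).congr ?_
    (intro z; have hz1 := hl z; have hz3 : z ∈ S ∨ z ∉ S := em _; simp only [Set.mem_union, Set.mem_ofPred_eq, List.mem_append, List.mem_cons, List.not_mem_nil] at *; grind only)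
  · exact mixed u v hu hv huv
  · exact (mixed v u hv hu huv.symm).congr (by (intro z; have hz1 := hl z; have hz3 : z ∈ S ∨ z ∉ S := em _; simp only [Set.mem_union, Set.mem_ofPred_eq, List.mem_append, List.mem_cons, List.not_mem_nil] at *; grind only))
  · have huv' : u ≠ v := fun h => huv (h ▸ rfl)
    obtain ⟨l1, l2, e⟩ := List.append_of_mem hu
    have hv' : v ∈ l1 ∨ v ∈ l2 := by
      have : v ∈ l := hv
      rw [e] at this
      simp [huv'.symm] at this
      exact this
    rcases hv' with h | h
    · obtain ⟨l3, l4, e'⟩ := List.append_of_mem h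
      exact (both v u l3 l4 l2 (by simp [e, e']) huv.symm).congr (by (intro z; have hz1 := hl z; have hz3 : z ∈ S ∨ z ∉ S := em _; simp only [Set.mem_union, Set.mem_ofPred_eq, List.mem_append, List.mem_cons, List.not_mem_nil] at *; grind only))
    · obtain ⟨l3, l4, e'⟩ := List.append_of_mem h
      exact both u v l1 l3 l4 (by simp [e, e']) huv

/-- An ear with equal colours at its ends yields an even subdivision. -/
theorem theta_of_ear {c : V → Bool} (hcol : ∀ x y, G.Adj x y → c x ≠ c y) {S : Set V}
    (hS : Conn G S) {s s' t r : V} (hs : s ∈ S) (hs' : s' ∈ S) (hss : s ≠ s')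
    (hcs : c s = c s') (hst : G.Adj s t) (hrs : G.Adj r s') (q : G.Walk t r) (hq : q.IsPath)
    (hqS : ∀ z ∈ q.support, z ∉ S) (w0 : ∃ p : G.Walk s' s, ∀ z ∈ p.support, z ∈ S) :
    G.ContainsEvenSubdivision (completeBipartiteGraph (Fin 2) (Fin 3)) := by
  have wcol : ∀ {a b : V} (p : G.Walk a b), c a ≠ c b → Odd p.length := by
    intro a b p
    induction p with
    | nil => intro h; exact absurd rfl h
    | @cons a b d h p ih =>
      intro hne
      have h1 := hcol _ _ h
      have h2 : c b = c d := bool_ne h1 hne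
      clear ih
      rw [Walk.length_cons]
      have : ∀ {a b : V} (p : G.Walk a b), (c a = c b ↔ Even p.length) := by
        intro a b p
        induction p with
        | nil => simp
        | cons h p ih =>
          rw [Walk.length_cons, Nat.even_add_one, ← ih]
          have := hcol _ _ h
          revert this
          generalize c _ = x
          generalize c _ = y
          generalize c _ = z
          revert x y z
          decide
      exact ((this p).1 h2).add_one
  obtain ⟨p0, hp0⟩ := w0
  obtain ⟨P, Q, hP, hQ, hPS, hQS, hPQ⟩ := whitney hS p0 hp0 hss
  cases P with
  | nil => exact absurd rfl hss
  | @cons _ y1 _ a1 P =>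
  cases Q with
  | nil => exact absurd rfl hss
  | @cons _ y2 _ a2 Q =>
  rw [Walk.cons_isPath_iff] at hP hQ
  have hPQ' : ∀ x ∈ P.support, x ∈ Q.support → x = s' := by
    intro x h1 h2
    rcases hPQ x (by simp [h1]) (by simp [h2]) with h | h
    · exact absurd (h ▸ h1) hP.2
    · exact h
  have tS : ∀ x, x ∈ (q.concat hrs).support → x ∈ S → x = s' := by
    intro x hx hxS
    rw [Walk.support_concat] at hx
    simp at hx
    rcases hx with hx | hx
    · exact absurd hxS (hqS x hx)
    · exact hx
  have PS : ∀ x ∈ P.support, x ∈ S := fun x hx => hPS x (by simp [hx])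
  have QS : ∀ x ∈ Q.support, x ∈ S := fun x hx => hQS x (by simp [hx])
  let y : Fin 3 → V := ![y1, y2, t]
  let T : ∀ i, G.Walk (y i) s' := fun i => match i with
    | 0 => P
    | 1 => Q
    | 2 => q.concat hrs
  have hadj : ∀ i, G.Adj s (y i) := by
    intro i
    fin_cases i
    · exact a1
    · exact a2
    · exact hst
  refine theta hss y hadj T ?_ ?_ ?_ ?_
  · intro i
    fin_cases i
    · exact hP.1
    · exact hQ.1
    · exact hq.concat (fun h => hqS _ h hs') hrs
  · intro i
    fin_cases i
    · exact hP.2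
    · exact hQ.2
    · intro h
      exact hss (tS s h hs)
  · intro i
    apply wcol
    rw [← hcs]
    exact (hcol _ _ (hadj i)).symm
  · intro i j hij x hx hx'
    fin_cases i <;> fin_cases j
    · exact absurd rfl hij
    · exact hPQ' x hx hx'
    · exact tS x hx' (PS x hx)
    · exact hPQ' x hx' hx
    · exact absurd rfl hij
    · exact tS x hx' (QS x hx)
    · exact tS x hx (PS x hx')
    · exact tS x hx (QS x hx')
    · exact absurd rfl hij

theorem conn_univ (h2 : G.TwoConnected) : Conn G Set.univ := by
  intro w u v _ _ hu hv
  obtain ⟨p⟩ := (h2.2 w).preconnected ⟨u, by simpa using hu⟩ ⟨v, by simpa using hv⟩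
  refine ⟨p.map (Subgraph.hom _), ?_⟩
  intro z hz
  have e := Walk.support_map (Subgraph.hom ((⊤ : G.Subgraph).deleteVerts {w})) p
  have hz : z ∈ p.support.map (Subgraph.hom ((⊤ : G.Subgraph).deleteVerts {w})) := e ▸ hz
  rw [List.mem_map] at hz
  obtain ⟨a, -, rfl⟩ := hz
  have := a.2
  simp at this
  exact ⟨trivial, this⟩

theorem main [Finite V] (h2 : G.TwoConnected) {c : V → Bool}
    (hcol : ∀ x y, G.Adj x y → c x ≠ c y)
    (h : ¬ G.ContainsEvenSubdivision (completeBipartiteGraph (Fin 2) (Fin 3)))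
    {x y : V} (hxy : G.Adj x y) : Mat G c Set.univ := by
  have hU := conn_univ h2
  let I : Set (Set V) := {S | x ∈ S ∧ y ∈ S ∧ Conn G S ∧ Mat G c S}
  have hI : ({x, y} : Set V) ∈ I := by
    refine ⟨by simp, by simp, ?_, PM.pair hxy, ?_⟩
    · intro w u v hu hv huw hvw
      by_cases huv : u = v
      · subst huv
        exact R.refl ⟨hu, huw⟩
      · refine R.adj ?_ ⟨hu, huw⟩ ⟨hv, hvw⟩
        rcases hu with rfl | rfl <;> rcases hv with rfl | rfl
        · exact absurd rfl huv
        · exact hxy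
        · exact hxy.symm
        · exact absurd rfl huv
    · intro u v hu hv huv
      have huv' : u ≠ v := fun h => huv (h ▸ rfl)
      refine PM.empty.congr ?_
      grind
  obtain ⟨S, hS, hmax⟩ := (Set.toFinite I).exists_maximal ⟨_, hI⟩
  obtain ⟨hxS, hyS, hSC, hSM⟩ := hS
  by_cases hSu : S = Set.univ
  · exact hSu ▸ hSM
  exfalso
  obtain ⟨t0, ht0⟩ := (Set.ne_univ_iff_exists_notMem S).1 hSu
  obtain ⟨p, hp⟩ := hU y t0 x trivial trivial (fun h => ht0 (h ▸ hyS)) hxy.ne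
  obtain ⟨t, s, hs, -, hts, q0, -, hq0⟩ := firstHit S p ht0 hxS
  have htS : t ∉ S := (hq0 t (by simp)).2
  obtain ⟨s1, hs1, hss1⟩ : ∃ s1 ∈ S, s1 ≠ s := by
    by_cases hsx : x = s
    · exact ⟨y, hyS, fun h => hxy.ne (hsx.trans h.symm)⟩
    · exact ⟨x, hxS, hsx⟩
  obtain ⟨p1, hp1⟩ := hU s t s1 trivial trivial (fun h => htS (h ▸ hs)) hss1
  obtain ⟨r, s', hs', hs'p, hrs, q, hq, hqS⟩ := firstHit S p1 htS hs1
  have hss : s ≠ s' := ((hp1 s' hs'p).2).symm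
  have hqS' : ∀ z ∈ q.support, z ∉ S := fun z hz => (hqS z hz).2
  by_cases hcs : c s = c s'
  · apply h
    refine theta_of_ear hcol hSC hs hs' hss hcs hts.symm hrs q hq hqS' ?_
    obtain ⟨p, hp⟩ := hSC t s' s hs' hs (fun h => htS (h ▸ hs')) (fun h => htS (h ▸ hs))
    exact ⟨p, fun z hz => (hp z hz).1⟩
  · have hchain : (s :: (q.support ++ [s'])).IsChain G.Adj := by
      have := (Walk.cons hts.symm (q.concat hrs)).isChain_adj_support
      simpa [Walk.support_concat] using this
    have hnew : S ∪ {z | z ∈ q.support} ∈ I :=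
      ⟨Or.inl hxS, Or.inl hyS,
        hSC.ear hs hs' hss q.support hqS' hq.support_nodup hchain,
        hSM.ear hcol hs hs' hcs q.support hqS' hq.support_nodup hchain⟩
    exact htS (hmax hnew Set.subset_union_left (Or.inr (by simp)))

end EvenTheta

theorem stmt_16 {V : Type*} [Fintype V] (G : SimpleGraph V)
    (h2 : G.TwoConnected) (hbip : G.Colorable 2)
    (h : ¬ G.ContainsEvenSubdivision (completeBipartiteGraph (Fin 2) (Fin 3))) :
    ∀ e ∈ G.edgeSet, ∃ M : G.Subgraph, M.IsPerfectMatching ∧ e ∈ M.edgeSet := by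
  intro e he
  induction e with
  | _ x y =>
  have hxy : G.Adj x y := by simpa using he
  obtain ⟨C⟩ := hbip
  let c : V → Bool := fun v => decide (C v = 0)
  have hcol : ∀ x y, G.Adj x y → c x ≠ c y := by
    intro a b hab
    have := C.valid hab
    simp only [c]
    revert this
    generalize C a = i
    generalize C b = j
    revert i j
    decide
  have hM := EvenTheta.main h2 hcol h hxy
  have A := hM.2 x y trivial trivial (hcol _ _ hxy)
  have B := (EvenTheta.PM.pair hxy)
  classical
  obtain ⟨f, hf⟩ := A
  let g : V → V := fun z => if z = x then y else if z = y then x else f z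
  have hgx : g x = y := by simp [g]
  have hgy : g y = x := by simp [g, hxy.ne.symm]
  have hg : ∀ z, g (g z) = z ∧ G.Adj z (g z) := by
    intro z
    by_cases h1 : z = x
    · subst h1
      rw [hgx, hgy]
      exact ⟨rfl, hxy⟩
    · by_cases h2 : z = y
      · subst h2
        rw [hgy, hgx]
        exact ⟨rfl, hxy.symm⟩
      · obtain ⟨h3, h4, h5⟩ := hf z ⟨trivial, h1, h2⟩
        have e1 : g z = f z := by simp [g, h1, h2]
        have e2 : g (f z) = f (f z) := by simp [g, h3.2.1, h3.2.2]
        rw [e1, e2]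
        exact ⟨h4, h5⟩
  let M : G.Subgraph :=
    { verts := Set.univ
      Adj := fun a b => g a = b
      adj_sub := by
        rintro a b rfl
        exact (hg a).2
      edge_vert := fun _ => trivial
      symm := ⟨by
        rintro a b rfl
        exact (hg a).1⟩ }
  refine ⟨M, ?_, ?_⟩
  · rw [SimpleGraph.Subgraph.isPerfectMatching_iff]
    intro v
    exact ⟨g v, rfl, fun w hw => Eq.symm hw⟩
  · exact hgx
end

section
/- Let G be a 2-connected bipartite graph containing no even subdivision of K_{2,3}, and let G^e be a Pfaffian orientation of G. Then every cycle of G is oddly oriented in G^e. -/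
/-- An orientation of a simple graph `G`, encoded by its skew adjacency matrix entries:
`sign u v = 1` if the edge `uv` is directed from `u` to `v`, `-1` if it is directed
from `v` to `u`, and `0` if `uv` is not an edge. -/
structure SimpleGraph.Orientation {V : Type*} (G : SimpleGraph V) where
  sign : V → V → ℤ
  skew : ∀ u v, sign u v = - sign v u
  adj : ∀ u v, G.Adj u v → sign u v = 1 ∨ sign u v = -1
  not_adj : ∀ u v, ¬ G.Adj u v → sign u v = 0

/-- A closed walk is oddly oriented if an odd number of its edges are directed in
agreement with the traversal direction of the walk. -/
def SimpleGraph.Orientation.OddlyOriented {V : Type*} {G : SimpleGraph V}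
    (o : G.Orientation) {v : V} (c : G.Walk v v) : Prop :=
  Odd ((c.darts.filter (fun d => o.sign d.toProd.1 d.toProd.2 = 1)).length)

/-- A Pfaffian orientation: every nice cycle (a cycle `C` such that `G - V(C)` has a
perfect matching) is oddly oriented. -/
def SimpleGraph.Orientation.IsPfaffian {V : Type*} {G : SimpleGraph V}
    (o : G.Orientation) : Prop :=
  ∀ (v : V) (c : G.Walk v v), c.IsCycle →
    (∃ M : G.Subgraph, M.IsMatching ∧ M.verts = {w | w ∉ c.support}) →
    o.OddlyOriented c

namespace Stmt17

open SimpleGraph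

variable {V : Type*} {G : SimpleGraph V}

/-- `A` is the vertex set of a matching. -/
def Matched (G : SimpleGraph V) (A : Set V) : Prop :=
  ∃ M : G.Subgraph, M.IsMatching ∧ M.verts = A

/-- The graph induced on `S` stays connected after deletion of at most one vertex. -/
def Robust (G : SimpleGraph V) (S : Set V) : Prop :=
  ∀ T : Set V, T.Subsingleton → ∀ x ∈ S, ∀ y ∈ S, x ∉ T → y ∉ T →
    ∃ p : G.Walk x y, ∀ z ∈ p.support, z ∈ S ∧ z ∉ T

theorem matched_empty : Matched G (∅ : Set V) :=
  ⟨⊥, by intro v hv; simp at hv, rfl⟩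

theorem matched_pair {A : Set V} (hA : Matched G A) {a b : V} (ha : a ∉ A) (hb : b ∉ A)
    (hab : G.Adj a b) : Matched G (A ∪ {a, b}) := by
  obtain ⟨M, hM, rfl⟩ := hA
  refine ⟨M ⊔ G.subgraphOfAdj hab, hM.sup (Subgraph.IsMatching.subgraphOfAdj hab) ?_, ?_⟩
  · rw [hM.support_eq_verts, (Subgraph.IsMatching.subgraphOfAdj hab).support_eq_verts]
    rw [Set.disjoint_right]
    intro x hx
    simp at hx
    rcases hx with rfl | rfl <;> assumption
  · simp

theorem matched_walk : ∀ (n : ℕ) {a b : V} (p : G.Walk a b) (A : Set V), p.length = 2 * n + 1 →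
    p.IsPath → Matched G A → (∀ z ∈ p.support, z ∉ A) → Matched G (A ∪ {z | z ∈ p.support}) := by
  intro n
  induction n with
  | zero =>
    intro a b p A hl hp hA hd
    match p, hl, hp, hd with
    | .cons h .nil, hl, hp, hd =>
      have := matched_pair hA (hd _ (by simp)) (hd _ (by simp)) h
      convert this using 2
      ext z; simp
  | succ n ih =>
    intro a b p A hl hp hA hd
    match p, hl, hp, hd with
    | .cons h (.cons (v := w) h' q), hl, hp, hd =>
      have h1 := matched_pair hA (hd _ (by simp)) (hd _ (by simp)) h
      simp only [Walk.cons_isPath_iff, Walk.support_cons, List.mem_cons, not_or] at hp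
      have h2 := ih q _ (by simp at hl; omega) hp.1.1 h1 (by
        intro z hz hz'
        rcases hz' with hz' | hz'
        · exact hd z (by simp [hz]) hz'
        · simp at hz'
          rcases hz' with rfl | rfl
          · exact hp.2.2 hz
          · exact hp.1.2 hz)
      convert h2 using 1
      ext z; simp; tauto

theorem path_split {a b z : V} (p : G.Walk a b) (hp : p.IsPath) (hz : z ∈ p.support) :
    ∃ (q : G.Walk a z) (r : G.Walk z b), (∀ w ∈ q.support, w ∈ p.support) ∧
      (∀ w ∈ r.support, w ∈ p.support) ∧ (∀ w ∈ q.support, w ∈ r.support → w = z) := by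
  obtain ⟨q, r, rfl⟩ := Walk.mem_support_iff_exists_append.1 hz
  refine ⟨q, r, fun w hw => by simp [Walk.mem_support_append_iff, hw],
    fun w hw => by simp [Walk.mem_support_append_iff, hw], ?_⟩
  intro w hq hr
  have hn := hp.support_nodup
  rw [Walk.support_append] at hn
  rw [Walk.mem_support_iff] at hr
  rcases hr with h | h
  · exact h
  · exact absurd h (fun h => (List.nodup_append.1 hn).2.2 w hq w h rfl)

theorem robust_cycle {v : V} (c : G.Walk v v) (hc : c.IsCycle) :
    Robust G {z | z ∈ c.support} := by
  classical
  intro T hT x hx y hy hxT hyT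
  simp only [Set.mem_ofPred_eq] at hx hy ⊢
  have hc' := hc.rotate (u := x) hx
  have hy' : y ∈ (c.rotate x hx).support := by rwa [Walk.mem_support_rotate_iff]
  have hs : ∀ z, z ∈ (c.rotate x hx).support → z ∈ c.support := by
    intro z hz; rwa [Walk.mem_support_rotate_iff] at hz
  generalize c.rotate x hx = d at *
  obtain ⟨q, r, rfl⟩ := Walk.mem_support_iff_exists_append.1 hy'
  have hn := hc'.support_nodup
  rw [Walk.tail_support_append] at hn
  have key : ∀ w ∈ q.support, w ∈ r.support → w ∉ T := by
    intro w hq hr hw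
    rw [Walk.mem_support_iff] at hq hr
    rcases hq with rfl | hq
    · exact hxT hw
    rcases hr with rfl | hr
    · exact hyT hw
    exact (List.nodup_append.1 hn).2.2 w hq w hr rfl
  by_cases hqT : ∀ w ∈ q.support, w ∉ T
  · exact ⟨q, fun z hz => ⟨hs z (by simp [Walk.mem_support_append_iff, hz]), hqT z hz⟩⟩
  · push Not at hqT
    obtain ⟨w, hw, hwT⟩ := hqT
    refine ⟨r.reverse, fun z hz => ?_⟩
    simp at hz
    refine ⟨hs z (by simp [Walk.mem_support_append_iff, hz]), fun hzT => ?_⟩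
    have := hT hzT hwT
    subst this
    exact key z hw hz hzT

theorem robust_extend {S : Set V} (hS : Robust G S) {u y w w' : V} (hu : u ∈ S) (hy : y ∈ S)
    (huy : u ≠ y) (i : G.Walk w w') (hi : i.IsPath) (huw : G.Adj u w) (hwy : G.Adj w' y) 
    (hd : ∀ z ∈ i.support, z ∉ S) :
    Robust G (S ∪ {z | z ∈ i.support}) := by
  intro T hT
  have key : ∀ z ∈ S ∪ {z | z ∈ i.support}, z ∉ T → ∃ s ∈ S, s ∉ T ∧
      ∃ p : G.Walk z s, ∀ a ∈ p.support, a ∈ S ∪ {z | z ∈ i.support} ∧ a ∉ T := by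
    rintro z (hz | hz) hzT
    · exact ⟨z, hz, hzT, .nil, by simp [hz, hzT]⟩
    · obtain ⟨q, r, hq, hr, hqr⟩ := path_split i hi hz
      by_cases hA : (∀ a ∈ q.support, a ∉ T) ∧ u ∉ T
      · refine ⟨u, hu, hA.2, q.reverse.concat huw.symm, ?_⟩
        intro a ha
        simp [Walk.support_concat] at ha
        rcases ha with ha | rfl
        · exact ⟨Or.inr (hq a ha), hA.1 a ha⟩
        · exact ⟨Or.inl hu, hA.2⟩
      · have hB : ∃ t ∈ T, t ∈ q.support ∨ t = u := by
          by_contra hcon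
          push Not at hcon
          exact hA ⟨fun a ha hat => (hcon a hat).1 ha, fun hut => (hcon u hut).2 rfl⟩
        obtain ⟨t, htT, ht⟩ := hB
        have hrT : ∀ a ∈ r.support, a ∉ T := by
          intro a ha haT
          have := hT haT htT
          subst this
          rcases ht with ht | rfl
          · exact hzT ((hqr a ht ha) ▸ haT)
          · exact hd a (hr a ha) hu
        have hyT : y ∉ T := by
          intro hyT
          have := hT hyT htT
          subst this
          rcases ht with ht | rfl
          · exact hd _ (hq _ ht) hy
          · exact huy rfl
        refine ⟨y, hy, hyT, r.concat hwy, ?_⟩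
        intro a ha
        simp [Walk.support_concat] at ha
        rcases ha with ha | rfl
        · exact ⟨Or.inr (hr a ha), hrT a ha⟩
        · exact ⟨Or.inl hy, hyT⟩
  intro x hx z hz hxT hzT
  obtain ⟨s, hs, hsT, p, hp⟩ := key x hx hxT
  obtain ⟨t, ht, htT, q, hq⟩ := key z hz hzT
  obtain ⟨m, hm⟩ := hS T hT s hs t ht hsT htT
  refine ⟨p.append (m.append q.reverse), fun a ha => ?_⟩
  simp only [Walk.mem_support_append_iff, Walk.support_reverse, List.mem_reverse] at ha
  rcases ha with ha | ha | ha
  · exact hp a ha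
  · exact ⟨Or.inl (hm a ha).1, (hm a ha).2⟩
  · exact hq a ha

theorem first_hit (D : Set V) {a b : V} (p : G.Walk a b) (hb : b ∈ D) :
    ∃ r ∈ D, ∃ R : G.Walk a r, (∀ z ∈ R.support, z ∈ p.support) ∧
      ∀ z ∈ R.support, z ∈ D → z = r := by
  induction p with
  | nil => exact ⟨_, hb, .nil, by simp, by simp⟩
  | @cons a a' b h p ih =>
    by_cases ha : a ∈ D
    · exact ⟨a, ha, .nil, by simp, by simp⟩
    · obtain ⟨r, hr, R, h1, h2⟩ := ih hb
      refine ⟨r, hr, .cons h R, ?_, ?_⟩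
      · intro z hz; simp at hz ⊢; rcases hz with hz | hz
        · exact Or.inl hz
        · exact Or.inr (h1 z hz)
      · intro z hz hzD
        simp at hz
        rcases hz with rfl | hz
        · exact absurd hzD ha
        · exact h2 z hz hzD

theorem crossing (S : Set V) {a b : V} (p : G.Walk a b) (ha : a ∉ S) (hb : b ∈ S) :
    ∃ w' y, y ∈ S ∧ G.Adj w' y ∧ y ∈ p.support ∧ ∃ i : G.Walk a w', i.IsPath ∧
      ∀ z ∈ i.support, z ∉ S := by
  classical
  suffices H : ∃ w' y, y ∈ S ∧ G.Adj w' y ∧ y ∈ p.support ∧ ∃ i : G.Walk a w',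
      ∀ z ∈ i.support, z ∉ S by
    obtain ⟨w', y, h1, h2, h3, i, hi⟩ := H
    exact ⟨w', y, h1, h2, h3, i.bypass, i.bypass_isPath,
      fun z hz => hi z (i.support_bypass_subset_support hz)⟩
  induction p with
  | nil => exact absurd hb ha
  | @cons a a' b h p ih =>
    by_cases ha' : a' ∈ S
    · exact ⟨a, a', ha', h, by simp, .nil, by simpa using ha⟩
    · obtain ⟨w', y, h1, h2, h3, i, hi⟩ := ih ha' hb
      refine ⟨w', y, h1, h2, by simp [h3], .cons h i, ?_⟩
      intro z hz
      simp at hz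
      rcases hz with rfl | hz
      · exact ha
      · exact hi z hz

/-- Two internally disjoint paths in `S`. -/
def Linked (G : SimpleGraph V) (S : Set V) (x y : V) : Prop :=
  ∃ p q : G.Walk x y, p.IsPath ∧ q.IsPath ∧ (∀ z ∈ p.support, z ∈ S) ∧ (∀ z ∈ q.support, z ∈ S) ∧
    ∀ z ∈ p.support, z ∈ q.support → z = x ∨ z = y

theorem linked_of_walks {S : Set V} {x y : V} (p q : G.Walk x y) (hp : ∀ z ∈ p.support, z ∈ S)
    (hq : ∀ z ∈ q.support, z ∈ S) (h : ∀ z ∈ p.support, z ∈ q.support → z = x ∨ z = y) :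
    Linked G S x y := by
  classical
  exact ⟨p.bypass, q.bypass, p.bypass_isPath, q.bypass_isPath,
    fun z hz => hp z (p.support_bypass_subset_support hz),
    fun z hz => hq z (q.support_bypass_subset_support hz),
    fun z hz hz' => h z (p.support_bypass_subset_support hz) (q.support_bypass_subset_support hz')⟩

theorem linked_step_aux {S : Set V} {x y' y r : V} (p q : G.Walk x y') (hp : p.IsPath)
    (hpS : ∀ z ∈ p.support, z ∈ S) (hqS : ∀ z ∈ q.support, z ∈ S)
    (hpq : ∀ z ∈ p.support, z ∈ q.support → z = x ∨ z = y')
    (hyS : y ∈ S) (hadj : G.Adj y' y) (hyx : y ≠ x) (R : G.Walk y r)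
    (hRS : ∀ z ∈ R.support, z ∈ S) (hRy' : y' ∉ R.support) (hrp : r ∈ p.support)
    (hR : ∀ z ∈ R.support, z ∈ p.support ∨ z ∈ q.support → z = r) : Linked G S x y := by
  obtain ⟨p1, p2, h1, h2, h12⟩ := path_split p hp hrp
  have hry' : y' ≠ r := fun h => hRy' (h ▸ R.end_mem_support)
  have hy'p1 : y' ∉ p1.support := fun h => hry' (h12 _ h p2.end_mem_support)
  refine linked_of_walks (p1.append R.reverse) (q.concat hadj) ?_ ?_ ?_
  · intro z hz
    simp only [Walk.mem_support_append_iff, Walk.support_reverse, List.mem_reverse] at hz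
    rcases hz with hz | hz
    · exact hpS z (h1 z hz)
    · exact hRS z hz
  · intro z hz
    simp [Walk.support_concat] at hz
    rcases hz with hz | rfl
    · exact hqS z hz
    · exact hyS
  · intro z hz hz'
    simp only [Walk.mem_support_append_iff, Walk.support_reverse, List.mem_reverse] at hz
    simp [Walk.support_concat] at hz'
    rcases hz' with hz' | rfl
    · have hzp : z ∈ p.support := by
        rcases hz with hz | hz
        · exact h1 z hz
        · exact (hR z hz (Or.inr hz')) ▸ hrp
      rcases hpq z hzp hz' with h | h
      · exact Or.inl h
      · subst h
        rcases hz with hz | hz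
        · exact absurd hz hy'p1
        · exact absurd hz hRy'
    · exact Or.inr rfl

theorem linked_of_walk {S : Set V} (hS : Robust G S) {y x : V} (w : G.Walk y x)
    (hw : ∀ z ∈ w.support, z ∈ S) (hxy : y ≠ x) : Linked G S x y := by
  induction w with
  | nil => exact absurd rfl hxy
  | @cons y y' x hadj w ih =>
    have hyS : y ∈ S := hw y (by simp)
    by_cases hy'x : y' = x
    · subst hy'x
      refine linked_of_walks (.cons hadj.symm .nil) (.cons hadj.symm .nil) ?_ ?_ ?_
      · intro z hz; exact hw z (by simp at hz ⊢; rcases hz with rfl | rfl <;> simp)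
      · intro z hz; exact hw z (by simp at hz ⊢; rcases hz with rfl | rfl <;> simp)
      · intro z hz _; simpa using hz
    · have hxS : x ∈ S := hw x (by simp)
      obtain ⟨p, q, hp, hq, hpS, hqS, hpq⟩ := ih (fun z hz => hw z (by simp [hz])) hy'x
      obtain ⟨W, hW⟩ := hS {y'} Set.subsingleton_singleton y hyS x hxS
        (by simpa using hadj.ne) (by simpa using fun h => hy'x h.symm)
      obtain ⟨r, hr, R, hR1, hR2⟩ := first_hit {z | z ∈ p.support ∨ z ∈ q.support} W (by simp)
      have hRS : ∀ z ∈ R.support, z ∈ S := fun z hz => (hW z (hR1 z hz)).1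
      have hRy' : y' ∉ R.support := fun h => (hW _ (hR1 _ h)).2 rfl
      rcases hr with hr | hr
      · exact linked_step_aux p q hp hpS hqS hpq hyS hadj.symm hxy R hRS hRy' hr hR2
      · exact linked_step_aux q p hq hqS hpS (fun z h h' => hpq z h' h) hyS hadj.symm hxy R hRS
          hRy' hr (fun z hz h => hR2 z hz h.symm)

theorem linked {S : Set V} (hS : Robust G S) {x y : V} (hx : x ∈ S) (hy : y ∈ S) (hxy : x ≠ y) :
    Linked G S x y := by
  obtain ⟨w, hw⟩ := hS ∅ Set.subsingleton_empty y hy x hx (by simp) (by simp)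
  exact linked_of_walk hS w (fun z hz => (hw z hz).1) hxy.symm

theorem k23_of_walks (a : Fin 2 → V) (b : Fin 3 → V) (Q : ∀ i j, G.Walk (a i) (b j))
    (ha : Function.Injective a) (hb : Function.Injective b) (hab : ∀ i j, a i ≠ b j)
    (hQp : ∀ i j, (Q i j).IsPath) (hQo : ∀ i j, Odd (Q i j).length)
    (hQa : ∀ i j k, a k ∈ (Q i j).support → k = i)
    (hQb : ∀ i j k, b k ∈ (Q i j).support → k = j)
    (hQ : ∀ i j i' j', (i, j) ≠ (i', j') → ∀ x, x ∈ (Q i j).support → x ∈ (Q i' j').support →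
      (x = a i ∨ x = b j) ∧ (x = a i' ∨ x = b j')) :
    G.ContainsEvenSubdivision (completeBipartiteGraph (Fin 2) (Fin 3)) := by
  refine ⟨Sum.elim a b, ?_, fun s t h => match s, t, h with
    | .inl i, .inr j, _ => Q i j
    | .inr j, .inl i, _ => (Q i j).reverse
    | .inl i, .inl j, h => absurd h (by simp)
    | .inr i, .inr j, h => absurd h (by simp), ?_, ?_, ?_, ?_⟩
  · exact ha.sumElim hb hab
  · rintro (i | i) (j | j) h
    · simp at h
    · exact hQp i j
    · exact (hQp j i).reverse
    · simp at h
  · rintro (i | i) (j | j) h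
    · simp at h
    · exact hQo i j
    · simpa using hQo j i
    · simp at h
  · rintro (i | i) (j | j) h (k | k) hk
    · simp at h
    · simp at h
    · simpa using hQa i j k hk
    · simpa using hQb i j k hk
    · simp at hk; simpa using hQa j i k hk
    · simp at hk; simpa using hQb j i k hk
    · simp at h
    · simp at h
  · rintro (i | i) (j | j) (i' | i') (j' | j') h h' hne x hx hx'
    all_goals first
      | (exfalso; simp at h; done)
      | (exfalso; simp at h'; done)
      | skip
    · exact hQ i j i' j' (fun e => hne (by simp at e; simp [e])) x hx hx'
    · simp at hx'
      have := hQ i j j' i' (fun e => hne (by simp at e; simp [e])) x hx hx'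
      exact ⟨this.1, this.2.symm⟩
    · simp at hx
      have := hQ j i i' j' (fun e => hne (by simp at e; simp [e])) x hx hx'
      exact ⟨this.1.symm, this.2⟩
    · simp at hx hx'
      have := hQ j i j' i' (fun e => hne (by simp at e; simp [e])) x hx hx'
      exact ⟨this.1.symm, this.2.symm⟩

theorem even_path_split {u y : V} (huy : u ≠ y) (p : G.Walk u y) (hp : p.IsPath)
    (he : Even p.length) : ∃ b, ∃ q : G.Walk u b, ∃ r : G.Walk y b,
      b ≠ u ∧ b ≠ y ∧ b ∈ p.support ∧ q.IsPath ∧ r.IsPath ∧ Odd q.length ∧ Odd r.length ∧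
      (∀ z ∈ q.support, z = u ∨ z = b) ∧ (∀ z ∈ r.support, z ∈ p.support ∧ z ≠ u) := by
  match p, hp, he with
  | .nil, _, _ => exact absurd rfl huy
  | .cons (v := b) h r, hp, he =>
    rw [Walk.cons_isPath_iff] at hp
    have hr : Odd r.length := by
      rw [Walk.length_cons] at he
      exact Nat.not_even_iff_odd.1 (Nat.even_add_one.1 he)
    refine ⟨b, .cons h .nil, r.reverse, h.ne', ?_, by simp, by simp [h.ne], hp.1.reverse,
      by simp, by simpa using hr, by simp, ?_⟩
    · rintro rfl
      have hn := Walk.length_eq_zero_iff.2 (Walk.isPath_iff_nil.1 hp.1)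
      rw [hn] at hr
      simp at hr
    · intro z hz
      simp at hz
      exact ⟨by simp [hz], fun e => hp.2 (e ▸ hz)⟩

theorem k23_of_theta {u y : V} (huy : u ≠ y) (P : Fin 3 → G.Walk u y)
    (hP : ∀ i, (P i).IsPath) (he : ∀ i, Even (P i).length)
    (hd : ∀ i j, i ≠ j → ∀ z ∈ (P i).support, z ∈ (P j).support → z = u ∨ z = y) :
    G.ContainsEvenSubdivision (completeBipartiteGraph (Fin 2) (Fin 3)) := by
  choose b q r hbu hby hbP hq hr hqo hro hqs hrs using
    fun i => even_path_split huy (P i) (hP i) (he i)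
  have hbP' : ∀ i j, b i ∈ (P j).support → i = j := by
    intro i j hij
    by_contra hne
    rcases hd i j hne _ (hbP i) hij with h | h
    · exact hbu i h
    · exact hby i h
  have hbinj : ∀ i j, b i = b j → i = j := fun i j h => hbP' i j (h ▸ hbP j)
  refine k23_of_walks (fun i : Fin 2 => if i = 0 then u else y) b
    (fun i j => match i with
      | 0 => q j
      | 1 => r j) ?_ (fun i j => hbinj i j) ?_ ?_ ?_ ?_ ?_ ?_
  · intro i j; fin_cases i <;> fin_cases j <;> simp [huy, huy.symm]
  · intro i j; fin_cases i
    · exact (hbu j).symm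
    · exact (hby j).symm
  · intro i j; fin_cases i
    · exact hq j
    · exact hr j
  · intro i j; fin_cases i
    · exact hqo j
    · exact hro j
  · intro i j k hk
    fin_cases i <;> fin_cases k
    · rfl
    · exfalso
      rcases hqs j y hk with h | h
      · exact huy h.symm
      · exact hby j h.symm
    · exact absurd rfl (hrs j u hk).2
    · rfl
  · intro i j k hk
    fin_cases i
    · rcases hqs j _ hk with h | h
      · exact absurd h (hbu k)
      · exact hbinj _ _ h
    · exact hbP' k j (hrs j _ hk).1
  · intro i j i' j' hne x hx hx'
    fin_cases i <;> fin_cases i'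
    · have hjj : j ≠ j' := fun e => hne (by rw [e])
      rcases hqs j x hx with h | h
      · exact ⟨Or.inl h, Or.inl h⟩
      · rcases hqs j' x hx' with h' | h'
        · exact ⟨Or.inl h', Or.inl h'⟩
        · exact absurd (hbinj j j' (h ▸ h')) hjj
    · rcases hqs j x hx with h | h
      · exact absurd h (hrs j' x hx').2
      · have := hbP' j j' (h ▸ (hrs j' x hx').1)
        subst this
        exact ⟨Or.inr h, Or.inr h⟩
    · rcases hqs j' x hx' with h | h
      · exact absurd h (hrs j x hx).2
      · have := hbP' j' j (h ▸ (hrs j x hx).1)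
        subst this
        exact ⟨Or.inr h, Or.inr h⟩
    · have hjj : j ≠ j' := fun e => hne (by rw [e])
      rcases hd j j' hjj x (hrs j x hx).1 (hrs j' x hx').1 with h | h
      · exact absurd h (hrs j x hx).2
      · exact ⟨Or.inl h, Or.inl h⟩

theorem robust_walk_of_twoConnected (h2 : G.TwoConnected) {v x y : V} (hx : x ≠ v) (hy : y ≠ v) :
    ∃ p : G.Walk x y, v ∉ p.support := by
  obtain ⟨p⟩ := (h2.2 v).preconnected ⟨x, by simpa using hx⟩ ⟨y, by simpa using hy⟩
  refine ⟨p.map (Subgraph.hom _), ?_⟩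
  intro hv
  have hv' := (congrArg (v ∈ ·) (Walk.support_map (Subgraph.hom _) p)).mp hv
  obtain ⟨a, -, ha⟩ := List.mem_map.1 hv'
  have := a.2
  simp at this
  exact this ha

theorem ear_exists (h2 : G.TwoConnected) {S : Set V} {s s' : V} (hs : s ∈ S) (hs' : s' ∈ S)
    (hss : s ≠ s') {z : V} (hz : z ∉ S) :
    ∃ u y w w', u ∈ S ∧ y ∈ S ∧ u ≠ y ∧ G.Adj u w ∧ G.Adj w' y ∧
      ∃ i : G.Walk w w', i.IsPath ∧ ∀ a ∈ i.support, a ∉ S := by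
  obtain ⟨p, -⟩ := robust_walk_of_twoConnected h2 (v := s') (x := z) (y := s)
    (fun h => hz (h ▸ hs')) hss
  obtain ⟨w, u, hu, hwu, -, j, -, hj⟩ := crossing S p hz hs
  have hw : w ∉ S := hj w j.end_mem_support
  have ht : ∃ t ∈ S, t ≠ u := by
    by_cases h : s = u
    · exact ⟨s', hs', fun e => hss (h.trans e.symm)⟩
    · exact ⟨s, hs, h⟩
  obtain ⟨t, htS, htu⟩ := ht
  obtain ⟨q, hq⟩ := robust_walk_of_twoConnected h2 (v := u) (x := w) (y := t) hwu.ne htu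
  obtain ⟨w', y, hy, hwy, hyq, i, hi, hiS⟩ := crossing S q hw htS
  exact ⟨u, y, w, w', hu, hy, fun e => hq (e ▸ hyq), hwu.symm, hwy, i, hi, hiS⟩

theorem ear_odd (hbip : G.Colorable 2)
    (h : ¬ G.ContainsEvenSubdivision (completeBipartiteGraph (Fin 2) (Fin 3)))
    {S : Set V} (hS : Robust G S) {u y w w' : V} (hu : u ∈ S) (hy : y ∈ S)
    (huy : u ≠ y) (i : G.Walk w w') (hi : i.IsPath) (huw : G.Adj u w) (hwy : G.Adj w' y)
    (hd : ∀ z ∈ i.support, z ∉ S) : Odd i.length := by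
  by_contra hodd
  rw [Nat.not_odd_iff_even] at hodd
  obtain ⟨c0⟩ := hbip
  let c : G.Coloring Bool := (G.recolorOfEquiv finTwoEquiv) c0
  have hear : Even (Walk.cons huw (i.concat hwy)).length := by
    simp [Walk.length_concat]
    obtain ⟨k, hk⟩ := hodd
    exact ⟨k + 1, by omega⟩
  have heven : ∀ p : G.Walk u y, Even p.length := fun p =>
    (c.even_length_iff_congr p).2 ((c.even_length_iff_congr _).1 hear)
  obtain ⟨p, q, hp, hq, hpS, hqS, hpq⟩ := linked hS hu hy huy
  have hes : ∀ z ∈ (Walk.cons huw (i.concat hwy)).support, z ∈ S → z = u ∨ z = y := by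
    intro z hz hzS
    simp [Walk.support_concat] at hz
    rcases hz with hz | hz | hz
    · exact Or.inl hz
    · exact absurd hzS (hd z hz)
    · exact Or.inr hz
  have hep : (Walk.cons huw (i.concat hwy)).IsPath := by
    rw [Walk.cons_isPath_iff]
    refine ⟨?_, ?_⟩
    · exact hi.concat (fun hh => hd _ hh hy) hwy
    · simp [Walk.support_concat, huy]
      exact fun hh => hd _ hh hu
  generalize Walk.cons huw (i.concat hwy) = e at *
  refine h (k23_of_theta huy ![p, q, e] ?_ (fun i => heven _) ?_)
  · intro i; fin_cases i
    · exact hp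
    · exact hq
    · exact hep
  · intro i j hij z hz hz'
    fin_cases i <;> fin_cases j
    · exact absurd rfl hij
    · exact hpq z hz hz'
    · exact hes z hz' (hpS z hz)
    · exact hpq z hz' hz
    · exact absurd rfl hij
    · exact hes z hz' (hqS z hz)
    · exact hes z hz (hpS z hz')
    · exact hes z hz (hqS z hz')
    · exact absurd rfl hij

theorem cycle_nice [Finite V] (h2 : G.TwoConnected) (hbip : G.Colorable 2)
    (h : ¬ G.ContainsEvenSubdivision (completeBipartiteGraph (Fin 2) (Fin 3)))
    {v : V} (c : G.Walk v v) (hc : c.IsCycle) : Matched G {w | w ∉ c.support} := by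
  let C : Set V := {z | z ∈ c.support}
  let F : Set (Set V) := {S | C ⊆ S ∧ Robust G S ∧ Matched G (S \ C)}
  have hF : F.Nonempty := ⟨C, subset_rfl, robust_cycle c hc, by simpa using matched_empty⟩
  obtain ⟨S, ⟨hCS, hS, hM⟩, hmax⟩ := (Set.toFinite F).exists_maximal hF
  have huniv : ∀ z, z ∈ S := by
    by_contra hcon
    push Not at hcon
    obtain ⟨z, hz⟩ := hcon
    have hsnd : c.snd ∈ S := hCS (by simp [C])
    obtain ⟨u, y, w, w', hu, hy, huy, huw, hwy, i, hi, hiS⟩ := ear_exists h2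
      (hCS (show v ∈ C by simp [C])) hsnd (c.adj_snd hc.not_nil).ne hz
    obtain ⟨k, hk⟩ := ear_odd hbip h hS hu hy huy i hi huw hwy hiS
    have hm := matched_walk k i _ hk hi hM (fun a ha ha' => hiS a ha ha'.1)
    have hw : w ∈ S := hmax (y := S ∪ {z | z ∈ i.support})
      ⟨hCS.trans Set.subset_union_left,
        robust_extend hS hu hy huy i hi huw hwy hiS, by
          convert hm using 1
          ext a
          simp only [Set.mem_sdiff, Set.mem_union, Set.mem_ofPred_eq]
          have : a ∈ i.support → a ∉ C := fun ha haC => hiS a ha (hCS haC)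
          tauto⟩ Set.subset_union_left (Or.inr i.start_mem_support)
    exact hiS w i.start_mem_support hw
  convert hM using 1
  ext a
  simp [C, huniv a]

end Stmt17

theorem stmt_17 {V : Type*} [Fintype V] (G : SimpleGraph V)
    (h2 : G.TwoConnected) (hbip : G.Colorable 2)
    (h : ¬ G.ContainsEvenSubdivision (completeBipartiteGraph (Fin 2) (Fin 3)))
    (o : G.Orientation) (hpf : o.IsPfaffian) :
    ∀ (v : V) (c : G.Walk v v), c.IsCycle → o.OddlyOriented c := by
  intro v c hc
  exact hpf v c hc (Stmt17.cycle_nice h2 hbip h c hc)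
end
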